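/- arXiv:2109.14504 — 2 statements merged into one kernel-verified Lean document; each statement's English description precedes it below -/
import Mathlib

section
/- Let 1 < p ≤ ∞ and let p* be the Hölder conjugate of p. There exist absolute constants C, c, c₁, c₂ ∈ (0,∞) such that for every m ∈ ℕ, every 1 ≤ n < m, and all semiaxes σ₁ ≥ σ₂ ≥ … ≥ σ_m > 0, if G_{n,m} is an n×m random matrix with i.i.d. standard Gaussian entries, then with probability at least 1 − c₁·exp(−c₂·n) one has rad(E^m_{p,σ}, ker G_{n,m}) ≤ C·√(p*)·n^{−1/2}·(Σ_{j=k}^m σ_j^{p*})^{1/p*}, where k := max(1, ⌈c·n/p*⌉). -/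
open MeasureTheory ProbabilityTheory
open scoped ENNReal NNReal

/-- The `ℓ_p`-(quasi-)norm on `ℝ^m`, for `0 < p ≤ ∞`. -/
noncomputable def lpnorm (p : ℝ≥0∞) {m : ℕ} (x : Fin m → ℝ) : ℝ :=
  if p = ∞ then ⨆ j, |x j| else (∑ j, |x j| ^ p.toReal) ^ (1 / p.toReal)

/-- The `ℓ_p`-ellipsoid with semiaxes `σ`. -/
noncomputable def ellipsoid (p : ℝ≥0∞) {m : ℕ} (σ : Fin m → ℝ) : Set (Fin m → ℝ) :=
  {x | lpnorm p (fun j => x j / σ j) ≤ 1}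

/-- `rad_q(K, E)`: the supremum of the `ℓ_q`-norm over `K ∩ E`. -/
noncomputable def radq (q : ℝ≥0∞) {m : ℕ} (K E : Set (Fin m → ℝ)) : ℝ :=
  sSup (lpnorm q '' (K ∩ E))

/-- The distribution of an `n × m` random matrix with i.i.d. standard Gaussian entries. -/
noncomputable def gaussianMatrix (n m : ℕ) : Measure (Fin n → Fin m → ℝ) :=
  Measure.pi fun _ : Fin n => Measure.pi fun _ : Fin m => gaussianReal 0 1

/-- The kernel of a matrix `A ∈ ℝ^{n×m}`, as a subset of `ℝ^m`. -/
def kerSet {n m : ℕ} (A : Fin n → Fin m → ℝ) : Set (Fin m → ℝ) :=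
  {x | ∀ i, ∑ j, A i j * x j = 0}

/-- The Hölder conjugate `p*` of `p ∈ (1, ∞]`, as a real number
(with the convention `(∞ : ℝ≥0∞).toReal = 0`, so `pstar ∞ = 1`). -/
noncomputable def pstar (p : ℝ≥0∞) : ℝ := (1 - 1 / p.toReal)⁻¹

/-!
Put `q = p*`, let `H` be the set of the first `k - 1` coordinates, and let `T` be the `ℓ_q`-norm of
the remaining semiaxes. If `x` lies in the ellipsoid and `‖x‖₂ > T / √k`, then by Cauchy-Schwarz on
`H` and Hölder off `H` the unit vector `x / ‖x‖₂` is a barycenter of the `2m + 1` points `0` and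
`± 2√k e_j`. Its weights have relative entropy at most `3q` with respect to a prior that depends
only on the ellipsoid: uniform on `H`, and proportional to `(σ_j / T)^q` off `H`.

For a Gaussian matrix `A` with `n` rows, `exp (-2‖Ay‖² + (n/2) log (1 + 4‖y‖²))` has mean `1` for
every fixed `y`. Averaging this over `y` drawn from the prior and using the variational formula for
relative entropy bounds the mean of the exponent simultaneously under all posteriors (a PAC-Bayes
bound), outside an event of probability `exp (-n / 20)`. The posteriors are applied to averages of
`1000 k` independent samples (Maurey's empirical method), whose entropy is at most `n / 10` when
`k q ≤ n / 30000`. If `A x = 0`, such an average is close to `x / ‖x‖₂` and has a small image (by a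
second PAC-Bayes bound, for the squared norms of the columns of `A`), so the mean of the exponent is
almost `(n/2) log 2`, contradicting the first bound.
-/

section RelativeEntropy

variable {Ω : Type*} [Fintype Ω]

/-- The relative entropy `∑ ρ log (ρ / π)` of a weight vector `ρ` with respect to a weight
vector `π` on a finite type. The junk values of `/` and `log` give the usual convention
`0 log 0 = 0`. -/
noncomputable def relEntropy (ρ π : Ω → ℝ) : ℝ :=
  ∑ ω, ρ ω * Real.log (ρ ω / π ω)

-- Jensen's inequality for `exp`, applied to `f - log (ρ / π)` under the weights `ρ`.
lemma sum_mul_le_add_relEntropy {ρ π f : Ω → ℝ} {M : ℝ} (hρ : ρ ∈ stdSimplex ℝ Ω)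
    (hπ : ∀ ω, 0 < π ω) (hM : ∑ ω, π ω * Real.exp (f ω) ≤ Real.exp M) :
    ∑ ω, ρ ω * f ω ≤ M + relEntropy ρ π := by
  have jensen := convexOn_exp.map_sum_le (t := Finset.univ) (w := ρ)
    (p := fun ω => f ω - Real.log (ρ ω / π ω)) (fun ω _ => hρ.1 ω) hρ.2 fun ω _ => Set.mem_univ _
  have change_of_weights :
      ∑ ω, ρ ω * Real.exp (f ω - Real.log (ρ ω / π ω)) ≤ ∑ ω, π ω * Real.exp (f ω) := by
    refine Finset.sum_le_sum fun ω _ => ?_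
    have hπω := hπ ω
    rcases (hρ.1 ω).eq_or_lt with hρω | hρω
    · rw [← hρω, zero_mul]
      positivity
    · rw [Real.exp_sub, Real.exp_log (div_pos hρω hπω)]
      apply le_of_eq
      field_simp
  have := Real.exp_le_exp.1 ((jensen.trans change_of_weights).trans hM)
  simp only [smul_eq_mul, mul_sub, Finset.sum_sub_distrib] at this
  rw [relEntropy]
  linarith

end RelativeEntropy

section PacBayes

variable {Ω α : Type*} [Fintype Ω] [MeasurableSpace α]

lemma measureReal_exp_add_le {μ : Measure α} {X : α → ℝ} (hX : Integrable X μ)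
    (hX0 : 0 ≤ X) {K : ℝ} (hK : ∫ a, X a ∂μ ≤ Real.exp K) (s : ℝ) :
    μ.real {a | Real.exp (K + s) ≤ X a} ≤ Real.exp (-s) := by
  have markov := mul_meas_ge_le_integral_of_nonneg (.of_forall hX0) hX (Real.exp (K + s))
  have hexp : Real.exp (-s) = Real.exp K / Real.exp (K + s) := by
    rw [← Real.exp_sub]
    ring_nf
  rw [hexp, le_div_iff₀ (Real.exp_pos _), mul_comm]
  exact markov.trans hK

/-- The PAC-Bayes bound with prior `π` and level `M` for the family `f`: the mean of `f` under
every probability vector `ρ` is at most `M` plus the relative entropy of `ρ`. -/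
def PacBayesBound (π f : Ω → ℝ) (M : ℝ) : Prop :=
  ∀ ρ ∈ stdSimplex ℝ Ω, ∑ ω, ρ ω * f ω ≤ M + relEntropy ρ π

-- A single application of Markov's inequality, to the average over the prior, controls all `ρ`.
lemma measureReal_not_pacBayesBound_le {μ : Measure α} [IsFiniteMeasure μ] {π : Ω → ℝ}
    (hπ : ∀ ω, 0 < π ω) (hπ1 : ∑ ω, π ω ≤ 1) {F : Ω → α → ℝ}
    (hF : ∀ ω, Integrable (fun a => Real.exp (F ω a)) μ) {K : ℝ}
    (hK : ∀ ω, ∫ a, Real.exp (F ω a) ∂μ ≤ Real.exp K) (s : ℝ) :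
    μ.real {a | ¬ PacBayesBound π (fun ω => F ω a) (K + s)} ≤ Real.exp (-s) := by
  have integral_prior : ∫ a, ∑ ω, π ω * Real.exp (F ω a) ∂μ ≤ Real.exp K := by
    rw [integral_finsetSum _ fun ω _ => (hF ω).const_mul _]
    simp_rw [integral_const_mul]
    calc ∑ ω, π ω * ∫ a, Real.exp (F ω a) ∂μ
        ≤ ∑ ω, π ω * Real.exp K :=
          Finset.sum_le_sum fun ω _ => mul_le_mul_of_nonneg_left (hK ω) (hπ ω).le
      _ = (∑ ω, π ω) * Real.exp K := by rw [Finset.sum_mul]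
      _ ≤ Real.exp K := mul_le_of_le_one_left (Real.exp_pos _).le hπ1
  have subset : {a | ¬ PacBayesBound π (fun ω => F ω a) (K + s)} ⊆
      {a | Real.exp (K + s) ≤ ∑ ω, π ω * Real.exp (F ω a)} := by
    intro a ha
    by_contra hlt
    exact ha fun ρ hρ => sum_mul_le_add_relEntropy hρ hπ (not_le.1 hlt).le
  refine (measureReal_mono subset).trans
    (measureReal_exp_add_le (integrable_finsetSum _ fun ω _ => (hF ω).const_mul _)
      (fun a => Finset.sum_nonneg fun ω _ => ?_) integral_prior s)
  exact mul_nonneg (hπ ω).le (Real.exp_pos _).le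

end PacBayes

section Sampling

variable {Ω : Type*} {N : ℕ}

/-- The weight of a sample `J` of `N` independent draws from the weight vector `ρ`. -/
def iidWeight (N : ℕ) (ρ : Ω → ℝ) (J : Fin N → Ω) : ℝ :=
  ∏ i, ρ (J i)

/-- The average of `v` over the sample `J`; it is `0` for the empty sample. -/
noncomputable def sampleMean {E : Type*} [AddCommGroup E] [Module ℝ E] (v : Ω → E)
    (J : Fin N → Ω) : E :=
  (N : ℝ)⁻¹ • ∑ i, v (J i)

lemma map_sampleMean {E F : Type*} [AddCommGroup E] [Module ℝ E] [AddCommGroup F] [Module ℝ F]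
    (B : E →ₗ[ℝ] F) (v : Ω → E) (J : Fin N → Ω) :
    B (sampleMean v J) = sampleMean (fun ω => B (v ω)) J := by
  simp only [sampleMean, map_smul, map_sum]

lemma iidWeight_pos {ρ : Ω → ℝ} (hρ : ∀ ω, 0 < ρ ω) (J : Fin N → Ω) : 0 < iidWeight N ρ J :=
  Finset.prod_pos fun i _ => hρ (J i)

variable [Fintype Ω]

lemma sum_iidWeight (ρ : Ω → ℝ) : ∑ J, iidWeight N ρ J = (∑ ω, ρ ω) ^ N :=
  (Fintype.sum_pow ρ N).symm

lemma iidWeight_mem_stdSimplex {ρ : Ω → ℝ} (hρ : ρ ∈ stdSimplex ℝ Ω) :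
    iidWeight N ρ ∈ stdSimplex ℝ (Fin N → Ω) :=
  ⟨fun _ => Finset.prod_nonneg fun _ _ => hρ.1 _, by rw [sum_iidWeight, hρ.2, one_pow]⟩

lemma sum_iidWeight_succ_mul (ρ : Ω → ℝ) (f : (Fin (N + 1) → Ω) → ℝ) :
    ∑ J, iidWeight (N + 1) ρ J * f J =
      ∑ ω, ρ ω * ∑ J, iidWeight N ρ J * f (Fin.cons ω J) := by
  rw [← (Fin.consEquiv fun _ => Ω).sum_comp, Fintype.sum_prod_type]
  simp only [Fin.consEquiv, Equiv.coe_fn_mk, iidWeight, Fin.prod_univ_succ, Fin.cons_zero,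
    Fin.cons_succ, mul_assoc, Finset.mul_sum]

lemma relEntropy_iidWeight {ρ π : Ω → ℝ} (hρ : ρ ∈ stdSimplex ℝ Ω) (hπ : ∀ ω, 0 < π ω) :
    relEntropy (iidWeight N ρ) (iidWeight N π) = N * relEntropy ρ π := by
  induction N with
  | zero => simp [relEntropy, iidWeight]
  | succ N ih =>
    have log_cons (ω : Ω) (J : Fin N → Ω) : ρ ω * (iidWeight N ρ J *
          Real.log (iidWeight (N + 1) ρ (Fin.cons ω J) / iidWeight (N + 1) π (Fin.cons ω J))) =
        iidWeight N ρ J * (ρ ω * Real.log (ρ ω / π ω)) +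
          ρ ω * (iidWeight N ρ J * Real.log (iidWeight N ρ J / iidWeight N π J)) := by
      rcases eq_or_ne (ρ ω) 0 with hω | hω
      · simp [hω]
      rcases eq_or_ne (iidWeight N ρ J) 0 with hJ | hJ
      · simp [hJ]
      have cons_weight (τ : Ω → ℝ) :
          iidWeight (N + 1) τ (Fin.cons ω J) = τ ω * iidWeight N τ J := by
        simp only [iidWeight, Fin.prod_univ_succ, Fin.cons_zero, Fin.cons_succ]
      rw [cons_weight, cons_weight, mul_div_mul_comm,
        Real.log_mul (div_ne_zero hω (hπ ω).ne') (div_ne_zero hJ (iidWeight_pos hπ J).ne')]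
      ring
    rw [relEntropy, sum_iidWeight_succ_mul]
    simp_rw [Finset.mul_sum, log_cons, Finset.sum_add_distrib, ← Finset.sum_mul, ← Finset.mul_sum,
      ← Finset.sum_mul]
    rw [(iidWeight_mem_stdSimplex hρ).2, hρ.2, one_mul, one_mul]
    change relEntropy ρ π + relEntropy (iidWeight N ρ) (iidWeight N π) = _
    rw [ih]
    push_cast
    ring

variable {E : Type*} [NormedAddCommGroup E] [InnerProductSpace ℝ E]

lemma sum_iidWeight_mul_norm_sq_sum {ρ : Ω → ℝ} (hρ : ρ ∈ stdSimplex ℝ Ω) {v : Ω → E}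
    (hv : ∑ ω, ρ ω • v ω = 0) :
    ∑ J : Fin N → Ω, iidWeight N ρ J * ‖∑ i, v (J i)‖ ^ 2 = N * ∑ ω, ρ ω * ‖v ω‖ ^ 2 := by
  induction N with
  | zero => simp
  | succ N ih =>
    have cross_term (y : E) : ∑ ω, ρ ω * inner ℝ (v ω) y = 0 := by
      simp_rw [← real_inner_smul_left]
      rw [← sum_inner, hv, inner_zero_left]
    have expand (ω : Ω) (J : Fin N → Ω) : ρ ω * (iidWeight N ρ J * ‖v ω + ∑ i, v (J i)‖ ^ 2) =
        iidWeight N ρ J * (ρ ω * ‖v ω‖ ^ 2) +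
          2 * iidWeight N ρ J * (ρ ω * inner ℝ (v ω) (∑ i, v (J i))) +
          ρ ω * (iidWeight N ρ J * ‖∑ i, v (J i)‖ ^ 2) := by
      rw [norm_add_sq_real]
      ring
    rw [sum_iidWeight_succ_mul]
    simp only [Fin.sum_univ_succ, Fin.cons_zero, Fin.cons_succ]
    simp_rw [Finset.mul_sum, expand]
    rw [Finset.sum_comm]
    simp_rw [Finset.sum_add_distrib, ← Finset.mul_sum, cross_term, ← Finset.sum_mul]
    rw [(iidWeight_mem_stdSimplex hρ).2, hρ.2]
    simp_rw [one_mul, ih]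
    push_cast
    ring

lemma sum_mul_norm_sub_sq_le {ρ : Ω → ℝ} (hρ : ρ ∈ stdSimplex ℝ Ω) {v : Ω → E} {x : E}
    (hx : ∑ ω, ρ ω • v ω = x) :
    ∑ ω, ρ ω * ‖v ω - x‖ ^ 2 ≤ ∑ ω, ρ ω * ‖v ω‖ ^ 2 := by
  have inner_mean : ∑ ω, ρ ω * inner ℝ (v ω) x = ‖x‖ ^ 2 := by
    simp_rw [← real_inner_smul_left]
    rw [← sum_inner, hx, real_inner_self_eq_norm_sq]
  have expand (ω : Ω) : ρ ω * ‖v ω - x‖ ^ 2 =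
      ρ ω * ‖v ω‖ ^ 2 - 2 * (ρ ω * inner ℝ (v ω) x) + ρ ω * ‖x‖ ^ 2 := by
    rw [norm_sub_sq_real]
    ring
  simp_rw [expand]
  rw [Finset.sum_add_distrib, Finset.sum_sub_distrib, ← Finset.mul_sum, ← Finset.sum_mul,
    inner_mean, hρ.2]
  nlinarith [sq_nonneg ‖x‖]

lemma sum_iidWeight_mul_norm_sampleMean_sub_sq_le (hN : N ≠ 0) {ρ : Ω → ℝ}
    (hρ : ρ ∈ stdSimplex ℝ Ω) {v : Ω → E} {x : E} (hx : ∑ ω, ρ ω • v ω = x) :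
    ∑ J : Fin N → Ω, iidWeight N ρ J * ‖sampleMean v J - x‖ ^ 2 ≤
      (∑ ω, ρ ω * ‖v ω‖ ^ 2) / N := by
  have hN' : (N : ℝ) ≠ 0 := Nat.cast_ne_zero.2 hN
  have centered : ∑ ω, ρ ω • (v ω - x) = 0 := by
    simp_rw [smul_sub, Finset.sum_sub_distrib, hx, ← Finset.sum_smul, hρ.2, one_smul, sub_self]
  have sampleMean_sub (J : Fin N → Ω) :
      sampleMean v J - x = (N : ℝ)⁻¹ • ∑ i, (v (J i) - x) := by
    rw [Finset.sum_sub_distrib, Finset.sum_const, Finset.card_univ, Fintype.card_fin, smul_sub,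
      ← Nat.cast_smul_eq_nsmul ℝ, inv_smul_smul₀ hN', sampleMean]
  calc ∑ J : Fin N → Ω, iidWeight N ρ J * ‖sampleMean v J - x‖ ^ 2
      = ((N : ℝ)⁻¹) ^ 2 * ∑ J : Fin N → Ω, iidWeight N ρ J * ‖∑ i, (v (J i) - x)‖ ^ 2 := by
        rw [Finset.mul_sum]
        refine Finset.sum_congr rfl fun J _ => ?_
        rw [sampleMean_sub, norm_smul, mul_pow, Real.norm_eq_abs, sq_abs]
        ring
    _ = (∑ ω, ρ ω * ‖v ω - x‖ ^ 2) / N := by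
        rw [sum_iidWeight_mul_norm_sq_sum hρ centered]
        field_simp
    _ ≤ (∑ ω, ρ ω * ‖v ω‖ ^ 2) / N :=
        div_le_div_of_nonneg_right (sum_mul_norm_sub_sq_le hρ hx) N.cast_nonneg

lemma sum_iidWeight_mul_norm_sampleMean_smul_sub_sq_le (hN : N ≠ 0) {ρ : Ω → ℝ}
    (hρ : ρ ∈ stdSimplex ℝ Ω) {L : ℝ} {u : Ω → E} {x : E} (hx : ∑ ω, ρ ω • L • u ω = x) :
    ∑ J : Fin N → Ω, iidWeight N ρ J * ‖sampleMean (fun ω => L • u ω) J - x‖ ^ 2 ≤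
      L ^ 2 / N * ∑ ω, ρ ω * ‖u ω‖ ^ 2 := by
  refine (sum_iidWeight_mul_norm_sampleMean_sub_sq_le hN hρ hx).trans_eq ?_
  simp_rw [norm_smul, mul_pow, Real.norm_eq_abs, sq_abs, mul_left_comm _ (L ^ 2),
    ← Finset.mul_sum]
  ring

end Sampling

section KernelExponent

lemma log_two_mul_le_log_one_add_norm_sq {E : Type*} [SeminormedAddCommGroup E] {x : E}
    (hx : ‖x‖ = 1) (y : E) :
    Real.log 2 * (1 - 4 * ‖y - x‖ ^ 2) ≤ Real.log (1 + 4 * ‖y‖ ^ 2) := by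
  have log_two_pos := Real.log_pos one_lt_two
  rcases le_total (1 / 4) (‖y - x‖ ^ 2) with hfar | hnear
  · have : 0 ≤ Real.log (1 + 4 * ‖y‖ ^ 2) := Real.log_nonneg (by nlinarith [sq_nonneg ‖y‖])
    nlinarith
  · have one_le_sum_sq : 1 ≤ 2 * ‖y‖ ^ 2 + 2 * ‖y - x‖ ^ 2 := by
      have triangle : 1 ≤ ‖y‖ + ‖y - x‖ := by
        rw [← hx, norm_sub_rev]
        simpa using norm_add_le y (x - y)
      nlinarith [sq_nonneg (‖y‖ - ‖y - x‖)]
    have : Real.log 2 ≤ Real.log (1 + 4 * ‖y‖ ^ 2) :=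
      Real.log_le_log two_pos (by linarith)
    nlinarith [sq_nonneg ‖y - x‖]

variable {Ω E F : Type*} [SeminormedAddCommGroup E] [Module ℝ E] [SeminormedAddCommGroup F]
  [Module ℝ F]

/-- The exponent `-2‖By‖² + (n/2) log (1 + 4‖y‖²)`: its exponential has mean `1` when `B` is a
Gaussian matrix with `n` rows. -/
noncomputable def kernelExponent (n : ℝ) (B : E →ₗ[ℝ] F) (y : E) : ℝ :=
  -2 * ‖B y‖ ^ 2 + n / 2 * Real.log (1 + 4 * ‖y‖ ^ 2)

lemma le_sum_mul_kernelExponent [Fintype Ω] {n : ℝ} (hn : 0 ≤ n) {ρ : Ω → ℝ}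
    (hρ : ρ ∈ stdSimplex ℝ Ω) (B : E →ₗ[ℝ] F) {x : E} (hx : ‖x‖ = 1) (y : Ω → E) :
    -2 * ∑ ω, ρ ω * ‖B (y ω)‖ ^ 2 +
        n / 2 * (Real.log 2 * (1 - 4 * ∑ ω, ρ ω * ‖y ω - x‖ ^ 2)) ≤
      ∑ ω, ρ ω * kernelExponent n B (y ω) := by
  calc -2 * ∑ ω, ρ ω * ‖B (y ω)‖ ^ 2 +
        n / 2 * (Real.log 2 * (1 - 4 * ∑ ω, ρ ω * ‖y ω - x‖ ^ 2))
      = ∑ ω, ρ ω * (-2 * ‖B (y ω)‖ ^ 2 +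
          n / 2 * (Real.log 2 * (1 - 4 * ‖y ω - x‖ ^ 2))) := by
        nth_rw 1 [← hρ.2]
        simp only [Finset.mul_sum, ← Finset.sum_sub_distrib, ← Finset.sum_add_distrib]
        exact Finset.sum_congr rfl fun ω _ => by ring
    _ ≤ ∑ ω, ρ ω * kernelExponent n B (y ω) := by
        refine Finset.sum_le_sum fun ω _ => mul_le_mul_of_nonneg_left ?_ (hρ.1 ω)
        rw [kernelExponent]
        gcongr
        exact log_two_mul_le_log_one_add_norm_sq hx (y ω)

end KernelExponent

section KernelAvoidance

variable {Ω E F : Type*} [Fintype Ω] [NormedAddCommGroup E] [InnerProductSpace ℝ E]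
  [NormedAddCommGroup F] [InnerProductSpace ℝ F] {N : ℕ}

-- If `B x = 0`, the averages of `N` atoms drawn from `ρ` are close to `x` and have small images,
-- so the mean of `kernelExponent` is close to `(n / 2) log 2`, contradicting `sample_bound`.
lemma map_ne_zero_of_pacBayesBound {n : ℝ} (hn : 0 < n) (hN : 100 ≤ N) {B : E →ₗ[ℝ] F}
    {π : Ω → ℝ} (hπ : ∀ ω, 0 < π ω) {u : Ω → E} (hu : ∀ ω, ‖u ω‖ ≤ 1) {L : ℝ}
    (hL : L ^ 2 ≤ N / 250)
    (atom_bound : PacBayesBound π (fun ω => ‖B (u ω)‖ ^ 2 / 4) (n / 2 * Real.log 2 + n / 20))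
    (sample_bound : PacBayesBound (iidWeight N π)
      (fun J => kernelExponent n B (sampleMean (fun ω => L • u ω) J)) (n / 20))
    {ρ : Ω → ℝ} (hρ : ρ ∈ stdSimplex ℝ Ω) (hent : N * relEntropy ρ π ≤ n / 10) {x : E}
    (hx : ‖x‖ = 1) (hmean : ∑ ω, ρ ω • L • u ω = x) :
    B x ≠ 0 := by
  intro hBx
  have hN0 : N ≠ 0 := by omega
  have hNpos : (0 : ℝ) < N := by exact_mod_cast hN0.bot_lt
  have entropy_le : relEntropy ρ π ≤ n / 1000 := by
    have : (100 : ℝ) ≤ N := by exact_mod_cast hN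
    nlinarith
  have L_sq_div_le : L ^ 2 / N ≤ 1 / 250 := by
    rw [div_le_iff₀ hNpos]
    linarith
  have atoms_le : ∑ ω, ρ ω * ‖B (u ω)‖ ^ 2 ≤ 2 * n := by
    have := atom_bound ρ hρ
    simp_rw [← mul_div_assoc, ← Finset.sum_div] at this
    nlinarith [Real.log_two_lt_d9]
  have distance_le : ∑ J : Fin N → Ω,
      iidWeight N ρ J * ‖sampleMean (fun ω => L • u ω) J - x‖ ^ 2 ≤ 1 / 250 := by
    have unit_atoms : ∑ ω, ρ ω * ‖u ω‖ ^ 2 ≤ 1 := hρ.2 ▸ Finset.sum_le_sum fun ω _ =>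
      mul_le_of_le_one_right (hρ.1 ω) (pow_le_one₀ (norm_nonneg _) (hu ω))
    exact (sum_iidWeight_mul_norm_sampleMean_smul_sub_sq_le hN0 hρ hmean).trans
      ((mul_le_of_le_one_right (by positivity) unit_atoms).trans L_sq_div_le)
  have image_le : ∑ J : Fin N → Ω,
      iidWeight N ρ J * ‖B (sampleMean (fun ω => L • u ω) J)‖ ^ 2 ≤ 1 / 250 * (2 * n) := by
    have image_mean : ∑ ω, ρ ω • L • B (u ω) = 0 := by
      simp_rw [← hBx, ← hmean, map_sum, map_smul]
    have := sum_iidWeight_mul_norm_sampleMean_smul_sub_sq_le hN0 hρ image_mean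
    simp_rw [← map_smul B, ← map_sampleMean, sub_zero] at this
    exact this.trans (mul_le_mul L_sq_div_le atoms_le
      (Finset.sum_nonneg fun ω _ => mul_nonneg (hρ.1 ω) (sq_nonneg _)) (by norm_num))
  have upper := sample_bound _ (iidWeight_mem_stdSimplex hρ)
  rw [relEntropy_iidWeight hρ hπ] at upper
  have lower := le_sum_mul_kernelExponent hn.le (iidWeight_mem_stdSimplex (N := N) hρ) B hx
    (sampleMean fun ω => L • u ω)
  nlinarith [Real.log_two_gt_d9, mul_pos hn (Real.log_pos one_lt_two)]

end KernelAvoidance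

lemma ofReal_one_sub_add_le_measure {α : Type*} [MeasurableSpace α] {μ : Measure α}
    [IsProbabilityMeasure μ] {s t₁ t₂ : Set α} (h : sᶜ ⊆ t₁ ∪ t₂) {a b : ℝ} (ha : μ.real t₁ ≤ a)
    (hb : μ.real t₂ ≤ b) : ENNReal.ofReal (1 - (a + b)) ≤ μ s := by
  have total : 1 ≤ μ.real s + μ.real sᶜ := by simpa using measureReal_union_le (μ := μ) s sᶜ
  rw [← ofReal_measureReal]
  refine ENNReal.ofReal_le_ofReal ?_
  linarith [(measureReal_mono (μ := μ) h).trans (measureReal_union_le _ _)]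

section Gaussian

lemma gaussianPDFReal_mul_exp_neg_mul_sq (b y : ℝ) :
    gaussianPDFReal 0 1 y * Real.exp (-b * y ^ 2) =
      (√(2 * Real.pi))⁻¹ * Real.exp (-(b + 1 / 2) * y ^ 2) := by
  rw [gaussianPDFReal, mul_assoc, ← Real.exp_add, NNReal.coe_one, mul_one]
  ring_nf

lemma integrable_exp_neg_mul_sq_gaussianReal {b : ℝ} (hb : 0 < 1 + 2 * b) :
    Integrable (fun y : ℝ => Real.exp (-b * y ^ 2)) (gaussianReal 0 1) := by
  rw [gaussianReal_of_var_ne_zero _ one_ne_zero,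
    integrable_withDensity_iff (measurable_gaussianPDF 0 1)
      (.of_forall fun _ => gaussianPDF_lt_top)]
  refine ((integrable_exp_neg_mul_sq (b := b + 1 / 2) (by linarith)).const_mul
    (√(2 * Real.pi))⁻¹).congr (.of_forall fun y => ?_)
  dsimp only
  rw [toReal_gaussianPDF, ← gaussianPDFReal_mul_exp_neg_mul_sq, mul_comm]

lemma integral_exp_neg_mul_sq_gaussianReal {b : ℝ} (hb : 0 < 1 + 2 * b) :
    ∫ y, Real.exp (-b * y ^ 2) ∂gaussianReal 0 1 = (1 + 2 * b) ^ (-(1 / 2) : ℝ) := by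
  rw [integral_gaussianReal_eq_integral_smul one_ne_zero]
  simp_rw [smul_eq_mul, gaussianPDFReal_mul_exp_neg_mul_sq]
  rw [integral_const_mul, integral_gaussian, Real.rpow_neg hb.le, ← Real.sqrt_eq_rpow,
    ← Real.sqrt_inv, ← Real.sqrt_inv, ← Real.sqrt_mul (by positivity)]
  congr 1
  rw [show b + 1 / 2 = (1 + 2 * b) / 2 by ring]
  field_simp

section Row

variable {ι : Type*} [Fintype ι]

lemma map_inner_pi_gaussianReal (x : EuclideanSpace ℝ ι) :
    (Measure.pi fun _ : ι => gaussianReal 0 1).map (fun a => inner ℝ x (WithLp.toLp 2 a)) =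
      (gaussianReal 0 1).map (‖x‖ * ·) := by
  have hcomp : (fun a : ι → ℝ => inner ℝ x (WithLp.toLp 2 a)) =
      innerSL ℝ x ∘ WithLp.toLp 2 := rfl
  rw [hcomp, ← Measure.map_map (by fun_prop) (by fun_prop), map_pi_eq_stdGaussian,
    IsGaussian.map_eq_gaussianReal, integral_strongDual_stdGaussian, variance_dual_stdGaussian,
    gaussianReal_map_const_mul, innerSL_apply_norm, mul_zero, mul_one]
  congr 1
  exact Real.toNNReal_of_nonneg (sq_nonneg _)

lemma integrable_exp_neg_mul_inner_sq_pi_gaussianReal {b : ℝ} {x : EuclideanSpace ℝ ι}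
    (hb : 0 < 1 + 2 * (b * ‖x‖ ^ 2)) :
    Integrable (fun a => Real.exp (-b * inner ℝ x (WithLp.toLp 2 a) ^ 2))
      (Measure.pi fun _ : ι => gaussianReal 0 1) := by
  have hexp : Continuous fun y : ℝ => Real.exp (-b * y ^ 2) := by fun_prop
  refine (integrable_map_measure (f := fun a => inner ℝ x (WithLp.toLp 2 a))
    hexp.aestronglyMeasurable (by fun_prop)).1 ?_
  rw [map_inner_pi_gaussianReal,
    integrable_map_measure hexp.aestronglyMeasurable (by fun_prop)]
  refine (integrable_exp_neg_mul_sq_gaussianReal hb).congr (.of_forall fun y => ?_)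
  simp only [Function.comp_apply]
  ring_nf

lemma integral_exp_neg_mul_inner_sq_pi_gaussianReal {b : ℝ} {x : EuclideanSpace ℝ ι}
    (hb : 0 < 1 + 2 * (b * ‖x‖ ^ 2)) :
    ∫ a, Real.exp (-b * inner ℝ x (WithLp.toLp 2 a) ^ 2)
        ∂Measure.pi (fun _ : ι => gaussianReal 0 1) =
      (1 + 2 * (b * ‖x‖ ^ 2)) ^ (-(1 / 2) : ℝ) := by
  have hexp : Continuous fun y : ℝ => Real.exp (-b * y ^ 2) := by fun_prop
  rw [← integral_map (φ := fun a => inner ℝ x (WithLp.toLp 2 a))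
      (f := fun y => Real.exp (-b * y ^ 2)) (by fun_prop) hexp.aestronglyMeasurable,
    map_inner_pi_gaussianReal,
    integral_map (by fun_prop) hexp.aestronglyMeasurable,
    ← integral_exp_neg_mul_sq_gaussianReal hb]
  ring_nf

end Row

variable {n m : ℕ}

instance : IsProbabilityMeasure (gaussianMatrix n m) := by
  unfold gaussianMatrix
  infer_instance

lemma mem_kerSet_iff_toEuclideanLin {A : Fin n → Fin m → ℝ} {x : Fin m → ℝ} :
    x ∈ kerSet A ↔ (Matrix.of A).toEuclideanLin (WithLp.toLp 2 x) = 0 := by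
  simp [kerSet, funext_iff, Matrix.mulVec, dotProduct]

lemma exp_neg_mul_norm_toEuclideanLin_sq (b : ℝ) (A : Fin n → Fin m → ℝ)
    (x : EuclideanSpace ℝ (Fin m)) :
    Real.exp (-b * ‖(Matrix.of A).toEuclideanLin x‖ ^ 2) =
      ∏ i, Real.exp (-b * inner ℝ x (WithLp.toLp 2 (A i)) ^ 2) := by
  rw [EuclideanSpace.real_norm_sq_eq, Finset.mul_sum, Real.exp_sum]
  simp [Matrix.mulVec, dotProduct, PiLp.inner_apply]

lemma integrable_exp_neg_mul_norm_sq_gaussianMatrix {b : ℝ} {x : EuclideanSpace ℝ (Fin m)}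
    (hb : 0 < 1 + 2 * (b * ‖x‖ ^ 2)) :
    Integrable (fun A => Real.exp (-b * ‖(Matrix.of A).toEuclideanLin x‖ ^ 2))
      (gaussianMatrix n m) := by
  simp_rw [exp_neg_mul_norm_toEuclideanLin_sq]
  exact Integrable.fintype_prod fun _ => integrable_exp_neg_mul_inner_sq_pi_gaussianReal hb

lemma integral_exp_neg_mul_norm_sq_gaussianMatrix {b : ℝ} {x : EuclideanSpace ℝ (Fin m)}
    (hb : 0 < 1 + 2 * (b * ‖x‖ ^ 2)) :
    ∫ A, Real.exp (-b * ‖(Matrix.of A).toEuclideanLin x‖ ^ 2) ∂gaussianMatrix n m =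
      Real.exp (-(n / 2 * Real.log (1 + 2 * (b * ‖x‖ ^ 2)))) := by
  simp_rw [exp_neg_mul_norm_toEuclideanLin_sq]
  rw [gaussianMatrix, integral_fintype_prod_eq_prod
    (f := fun _ a => Real.exp (-b * inner ℝ x (WithLp.toLp 2 a) ^ 2)), Finset.prod_const,
    integral_exp_neg_mul_inner_sq_pi_gaussianReal hb, Finset.card_univ, Fintype.card_fin,
    Real.rpow_def_of_pos hb, ← Real.exp_nat_mul]
  ring_nf

lemma integrable_exp_kernelExponent_gaussianMatrix (x : EuclideanSpace ℝ (Fin m)) :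
    Integrable (fun A => Real.exp (kernelExponent n (Matrix.of A).toEuclideanLin x))
      (gaussianMatrix n m) := by
  simp_rw [kernelExponent, Real.exp_add]
  exact (integrable_exp_neg_mul_norm_sq_gaussianMatrix (by positivity)).mul_const _

lemma integral_exp_kernelExponent_gaussianMatrix (x : EuclideanSpace ℝ (Fin m)) :
    ∫ A, Real.exp (kernelExponent n (Matrix.of A).toEuclideanLin x) ∂gaussianMatrix n m = 1 := by
  simp_rw [kernelExponent, Real.exp_add]
  rw [integral_mul_const, integral_exp_neg_mul_norm_sq_gaussianMatrix (by positivity),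
    ← Real.exp_add, Real.exp_eq_one_iff]
  ring_nf

lemma integrable_exp_norm_sq_div_four_gaussianMatrix {x : EuclideanSpace ℝ (Fin m)}
    (hx : ‖x‖ ≤ 1) :
    Integrable (fun A => Real.exp (‖(Matrix.of A).toEuclideanLin x‖ ^ 2 / 4))
      (gaussianMatrix n m) := by
  have := integrable_exp_neg_mul_norm_sq_gaussianMatrix (n := n) (b := -1 / 4) (x := x)
    (by nlinarith [norm_nonneg x])
  refine this.congr (.of_forall fun A => ?_)
  ring_nf

lemma integral_exp_norm_sq_div_four_gaussianMatrix_le {x : EuclideanSpace ℝ (Fin m)}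
    (hx : ‖x‖ ≤ 1) :
    ∫ A, Real.exp (‖(Matrix.of A).toEuclideanLin x‖ ^ 2 / 4) ∂gaussianMatrix n m ≤
      Real.exp (n / 2 * Real.log 2) := by
  have hx2 : ‖x‖ ^ 2 ≤ 1 := pow_le_one₀ (norm_nonneg x) hx
  calc ∫ A, Real.exp (‖(Matrix.of A).toEuclideanLin x‖ ^ 2 / 4) ∂gaussianMatrix n m
      = ∫ A, Real.exp (-(-1 / 4) * ‖(Matrix.of A).toEuclideanLin x‖ ^ 2) ∂gaussianMatrix n m := by
        ring_nf
    _ = Real.exp (n / 2 * -Real.log (1 + 2 * (-1 / 4 * ‖x‖ ^ 2))) := by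
        rw [integral_exp_neg_mul_norm_sq_gaussianMatrix (by linarith), mul_neg]
    _ ≤ Real.exp (n / 2 * Real.log 2) := by
        rw [← Real.log_inv]
        gcongr
        · exact inv_pos.2 (by linarith)
        · rw [inv_le_comm₀ (by linarith) two_pos]
          linarith

-- The two bounds needed in `map_ne_zero_of_pacBayesBound` each fail with probability at most
-- `exp (-n / 20)`.
theorem gaussianMatrix_toEuclideanLin_ne_zero {Ω : Type*} [Fintype Ω] (hn : 0 < n) {N : ℕ}
    (hN : 100 ≤ N) {π : Ω → ℝ} (hπ : ∀ ω, 0 < π ω) (hπ1 : ∑ ω, π ω ≤ 1)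
    {u : Ω → EuclideanSpace ℝ (Fin m)} (hu : ∀ ω, ‖u ω‖ ≤ 1) {L : ℝ} (hL : L ^ 2 ≤ N / 250) :
    ENNReal.ofReal (1 - 2 * Real.exp (-(1 / 20) * n)) ≤ gaussianMatrix n m {A |
      ∀ ρ ∈ stdSimplex ℝ Ω, N * relEntropy ρ π ≤ n / 10 → ‖∑ ω, ρ ω • L • u ω‖ = 1 →
        (Matrix.of A).toEuclideanLin (∑ ω, ρ ω • L • u ω) ≠ 0} := by
  have atom_fails := measureReal_not_pacBayesBound_le (μ := gaussianMatrix n m) hπ hπ1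
    (fun ω => integrable_exp_norm_sq_div_four_gaussianMatrix (hu ω))
    (fun ω => integral_exp_norm_sq_div_four_gaussianMatrix_le (hu ω)) (n / 20)
  have sample_fails := measureReal_not_pacBayesBound_le (μ := gaussianMatrix n m) (K := 0)
    (iidWeight_pos (N := N) hπ)
    (sum_iidWeight π ▸ pow_le_one₀ (Finset.sum_nonneg fun ω _ => (hπ ω).le) hπ1)
    (fun J => integrable_exp_kernelExponent_gaussianMatrix (sampleMean (fun ω => L • u ω) J))
    (fun J => by rw [integral_exp_kernelExponent_gaussianMatrix, Real.exp_zero]) (n / 20)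
  rw [zero_add] at sample_fails
  rw [show 2 * Real.exp (-(1 / 20) * n) = Real.exp (-(n / 20)) + Real.exp (-(n / 20)) by ring_nf]
  refine ofReal_one_sub_add_le_measure ?_ atom_fails sample_fails
  rw [Set.compl_subset_comm, Set.compl_union]
  intro A hA ρ hρ hent hnorm
  exact map_ne_zero_of_pacBayesBound (Nat.cast_pos.2 hn) hN hπ hu hL (not_not.1 hA.1)
    (not_not.1 hA.2) hρ hent hnorm rfl

end Gaussian

section SignedCoordinates

variable {ι : Type*}

/-- The prior weights on the atoms `0` and `± e_j` of the cross-polytope, indexed by `none` and by a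
coordinate together with a sign: mass `1/3` at `0`, and mass proportional to the coordinate weight
`w j` at each of `± e_j`. -/
noncomputable def signedPrior (w : ι → ℝ) : Option (ι × Bool) → ℝ
  | none => 1 / 3
  | some (j, _) => w j / 6

lemma signedPrior_pos {w : ι → ℝ} (hw : ∀ j, 0 < w j) (ω : Option (ι × Bool)) :
    0 < signedPrior w ω := by
  rcases ω with _ | ⟨j, _⟩
  · norm_num [signedPrior]
  · exact div_pos (hw j) (by norm_num)

variable [Fintype ι]

/-- The atoms `0` (at `none`) and `± e_j` (at `some (j, ±)`) of the cross-polytope. -/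
noncomputable def signedUnitVector [DecidableEq ι] : Option (ι × Bool) → EuclideanSpace ℝ ι
  | none => 0
  | some (j, true) => EuclideanSpace.single j 1
  | some (j, false) => -EuclideanSpace.single j 1

/-- The posterior weights on `signedUnitVector` with barycenter `y`: the positive and negative parts
of the coordinates, and the remaining mass at `0`. -/
noncomputable def signedPosterior (y : EuclideanSpace ℝ ι) : Option (ι × Bool) → ℝ
  | none => 1 - ∑ j, |y j|
  | some (j, true) => (y j)⁺
  | some (j, false) => (y j)⁻

lemma norm_signedUnitVector_le_one [DecidableEq ι] (ω : Option (ι × Bool)) :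
    ‖signedUnitVector ω‖ ≤ 1 := by
  rcases ω with _ | ⟨j, _ | _⟩ <;> simp [signedUnitVector]

lemma sum_signedPrior_le_one {w : ι → ℝ} (hw : ∑ j, w j ≤ 2) : ∑ ω, signedPrior w ω ≤ 1 := by
  rw [Fintype.sum_option, Fintype.sum_prod_type]
  simp only [signedPrior, Fintype.sum_bool, Finset.sum_add_distrib, ← Finset.sum_div]
  linarith

lemma signedPosterior_mem_stdSimplex {y : EuclideanSpace ℝ ι} (hy : ∑ j, |y j| ≤ 1) :
    signedPosterior y ∈ stdSimplex ℝ (Option (ι × Bool)) := by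
  refine ⟨?_, ?_⟩
  · rintro (_ | ⟨j, _ | _⟩)
    · exact sub_nonneg.2 hy
    · exact negPart_nonneg _
    · exact posPart_nonneg _
  · rw [Fintype.sum_option, Fintype.sum_prod_type]
    simp only [signedPosterior, Fintype.sum_bool, posPart_add_negPart, sub_add_cancel]

lemma sum_signedPosterior_smul_signedUnitVector [DecidableEq ι] (y : EuclideanSpace ℝ ι) :
    ∑ ω, signedPosterior y ω • signedUnitVector ω = y := by
  rw [Fintype.sum_option, Fintype.sum_prod_type]
  simp only [signedPosterior, signedUnitVector, Fintype.sum_bool, smul_zero, zero_add, smul_neg,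
    ← sub_eq_add_neg, ← sub_smul, posPart_sub_negPart]
  simpa using (EuclideanSpace.basisFun ι ℝ).sum_repr y

lemma mul_log_div_div_six {t w : ℝ} (hw : 0 < w) :
    t * Real.log (t / (w / 6)) = t * Real.log 6 + t * Real.log (t / w) := by
  rcases eq_or_ne t 0 with rfl | ht
  · simp
  · rw [← mul_add, ← Real.log_mul (by norm_num) (div_ne_zero ht hw.ne')]
    congr 2
    field_simp

lemma mul_log_div_third_le {t : ℝ} (ht0 : 0 ≤ t) (ht1 : t ≤ 1) :
    t * Real.log (t / (1 / 3)) ≤ t * Real.log 6 := by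
  rcases ht0.eq_or_lt with rfl | ht
  · simp
  · gcongr
    linarith

lemma sum_signedPosterior_mul_log (y : EuclideanSpace ℝ ι) {w : ι → ℝ} {j : ι} (hw : 0 < w j) :
    ∑ b, signedPosterior y (some (j, b)) *
        Real.log (signedPosterior y (some (j, b)) / signedPrior w (some (j, b))) =
      |y j| * Real.log 6 + |y j| * Real.log (|y j| / w j) := by
  rw [← mul_log_div_div_six hw]
  simp only [signedPosterior, signedPrior, Fintype.sum_bool]
  rcases le_total 0 (y j) with hj | hj
  · simp [posPart_of_nonneg hj, negPart_of_nonneg hj, abs_of_nonneg hj]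
  · simp [posPart_of_nonpos hj, negPart_of_nonpos hj, abs_of_nonpos hj]

lemma relEntropy_signedPosterior_signedPrior_le {y : EuclideanSpace ℝ ι} (hy : ∑ j, |y j| ≤ 1)
    {w : ι → ℝ} (hw : ∀ j, 0 < w j) :
    relEntropy (signedPosterior y) (signedPrior w) ≤
      Real.log 6 + ∑ j, |y j| * Real.log (|y j| / w j) := by
  rw [relEntropy, Fintype.sum_option, Fintype.sum_prod_type]
  simp_rw [sum_signedPosterior_mul_log y (hw _), Finset.sum_add_distrib, ← Finset.sum_mul]
  have zero_atom := mul_log_div_third_le (t := 1 - ∑ j, |y j|) (sub_nonneg.2 hy)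
    (sub_le_self _ (Finset.sum_nonneg fun j _ => abs_nonneg _))
  simp only [signedPosterior, signedPrior]
  linarith

end SignedCoordinates

section ConjugateExponent

variable {p : ℝ≥0∞}

lemma pstar_top : pstar ∞ = 1 := by
  simp [pstar]

lemma holderConjugate_pstar (hp : 1 < p) (hp_top : p ≠ ∞) :
    p.toReal.HolderConjugate (pstar p) := by
  rw [Real.holderConjugate_iff]
  refine ⟨?_, ?_⟩
  · simpa using (ENNReal.toReal_lt_toReal ENNReal.one_ne_top hp_top).2 hp
  · rw [pstar, inv_inv, one_div]
    ring

lemma one_le_pstar (hp : 1 < p) : 1 ≤ pstar p := by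
  rcases eq_or_ne p ∞ with rfl | hp_top
  · exact pstar_top.ge
  · exact (holderConjugate_pstar hp hp_top).symm.lt.le

-- Rescaling `log v ≤ v` to the power `P - 1` gives `log v ≤ (q - 1) v ^ (P - 1)`, which is applied
-- to `v = a t / t ^ q`.
lemma mul_log_div_rpow_le {P q : ℝ} (hPq : P.HolderConjugate q) {a t : ℝ} (ha : 0 ≤ a)
    (ht : 0 < t) : a * t * Real.log (a * t / t ^ q) ≤ (q - 1) * a ^ P := by
  have hq : 0 ≤ q - 1 := sub_nonneg.2 hPq.symm.lt.le
  have sub_one_mul_sub_one : (P - 1) * (q - 1) = 1 := by linarith [hPq.mul_eq_add]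
  rcases ha.eq_or_lt with rfl | ha
  · simpa using mul_nonneg hq (Real.rpow_nonneg le_rfl P)
  set v := a * t / t ^ q with hv
  have hv_pos : 0 < v := by positivity
  have log_le : Real.log v ≤ (q - 1) * v ^ (P - 1) := by
    have := Real.log_le_self (Real.rpow_nonneg hv_pos.le (P - 1))
    rw [Real.log_rpow hv_pos] at this
    calc Real.log v = (q - 1) * ((P - 1) * Real.log v) := by
          linear_combination (-Real.log v) * sub_one_mul_sub_one
      _ ≤ (q - 1) * v ^ (P - 1) := mul_le_mul_of_nonneg_left this hq
  have power : a * t * v ^ (P - 1) = a ^ P := by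
    have hv_eq : v = a * t ^ (1 - q) := by
      rw [hv, Real.rpow_sub ht, Real.rpow_one, mul_div_assoc]
    have exponent : (1 - q) * (P - 1) = -1 := by linarith [sub_one_mul_sub_one]
    rw [hv_eq, Real.mul_rpow ha.le (by positivity), ← Real.rpow_mul ht.le, exponent,
      Real.rpow_neg_one, Real.rpow_sub_one ha.ne']
    field_simp
  calc a * t * Real.log v ≤ a * t * ((q - 1) * v ^ (P - 1)) :=
        mul_le_mul_of_nonneg_left log_le (by positivity)
    _ = (q - 1) * a ^ P := by rw [← power]; ring

end ConjugateExponent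

section Ellipsoid

variable {p : ℝ≥0∞} {m : ℕ}

lemma lpnorm_two (x : Fin m → ℝ) : lpnorm 2 x = ‖WithLp.toLp 2 x‖ := by
  simp [lpnorm, EuclideanSpace.norm_eq, Real.sqrt_eq_rpow]

lemma abs_le_one_of_lpnorm_top_le_one {α : Fin m → ℝ} (hα : lpnorm ∞ α ≤ 1) (j : Fin m) :
    |α j| ≤ 1 := by
  rw [lpnorm, if_pos rfl] at hα
  exact (le_ciSup (Set.finite_range fun i => |α i|).bddAbove j).trans hα

lemma sum_rpow_le_one_of_lpnorm_le_one (hp : p ≠ 0) (hp_top : p ≠ ∞) {α : Fin m → ℝ}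
    (hα : lpnorm p α ≤ 1) (s : Finset (Fin m)) : ∑ j ∈ s, |α j| ^ p.toReal ≤ 1 := by
  have hp_pos := ENNReal.toReal_pos hp hp_top
  have nonneg (j : Fin m) : 0 ≤ |α j| ^ p.toReal := Real.rpow_nonneg (abs_nonneg _) _
  rw [lpnorm, if_neg hp_top] at hα
  refine (Finset.sum_le_univ_sum_of_nonneg nonneg).trans ?_
  simpa [hp_pos.ne'] using
    (Real.rpow_inv_le_iff_of_pos (Finset.sum_nonneg fun j _ => nonneg j) zero_le_one hp_pos).1
      (one_div p.toReal ▸ hα)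

/-- The `ℓ_{p*}`-norm of the semiaxes `σ` with indices in `s`. -/
noncomputable def dualNorm (p : ℝ≥0∞) (σ : Fin m → ℝ) (s : Finset (Fin m)) : ℝ :=
  (∑ j ∈ s, σ j ^ pstar p) ^ (1 / pstar p)

variable {σ : Fin m → ℝ}

lemma dualNorm_nonneg (hσ : ∀ j, 0 ≤ σ j) (s : Finset (Fin m)) : 0 ≤ dualNorm p σ s :=
  Real.rpow_nonneg (Finset.sum_nonneg fun j _ => Real.rpow_nonneg (hσ j) _) _

lemma dualNorm_pos (hσ : ∀ j, 0 < σ j) {s : Finset (Fin m)} (hs : s.Nonempty) :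
    0 < dualNorm p σ s :=
  Real.rpow_pos_of_pos (Finset.sum_pos (fun j _ => Real.rpow_pos_of_pos (hσ j) _) hs) _

lemma sum_div_dualNorm_rpow_le_one (hp : 1 < p) (hσ : ∀ j, 0 ≤ σ j) (s : Finset (Fin m)) :
    ∑ j ∈ s, (σ j / dualNorm p σ s) ^ pstar p ≤ 1 := by
  have hq : pstar p ≠ 0 := (zero_lt_one.trans_le (one_le_pstar hp)).ne'
  have hsum : 0 ≤ ∑ j ∈ s, σ j ^ pstar p :=
    Finset.sum_nonneg fun j _ => Real.rpow_nonneg (hσ j) _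
  rw [Finset.sum_congr rfl fun j _ => Real.div_rpow (hσ j) (dualNorm_nonneg hσ s) (pstar p),
    ← Finset.sum_div]
  rw [dualNorm, one_div, Real.rpow_inv_rpow hsum hq]
  exact div_self_le_one _

variable {x : Fin m → ℝ}

lemma sum_abs_le_dualNorm (hp : 1 < p) (hσ : ∀ j, 0 < σ j) (hx : x ∈ ellipsoid p σ)
    (s : Finset (Fin m)) : ∑ j ∈ s, |x j| ≤ dualNorm p σ s := by
  have abs_eq (j : Fin m) : |x j| = |x j / σ j| * σ j := by
    rw [abs_div, abs_of_pos (hσ j), div_mul_cancel₀ _ (hσ j).ne']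
  simp_rw [abs_eq]
  rcases eq_or_ne p ∞ with rfl | hp_top
  · simp only [dualNorm, pstar_top, Real.rpow_one, div_one]
    exact Finset.sum_le_sum fun j _ =>
      mul_le_of_le_one_left (hσ j).le (abs_le_one_of_lpnorm_top_le_one hx j)
  · refine (Real.inner_le_Lp_mul_Lq s _ _ (holderConjugate_pstar hp hp_top)).trans ?_
    simp_rw [abs_abs, abs_of_pos (hσ _)]
    refine mul_le_of_le_one_left (dualNorm_nonneg (fun j => (hσ j).le) s) (Real.rpow_le_one ?_
      (sum_rpow_le_one_of_lpnorm_le_one (zero_lt_one.trans hp).ne' hp_top hx s) (by positivity))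
    exact Finset.sum_nonneg fun j _ => Real.rpow_nonneg (abs_nonneg _) _

lemma sum_abs_div_mul_log_le (hp : 1 < p) (hσ : ∀ j, 0 < σ j) (hx : x ∈ ellipsoid p σ)
    (s : Finset (Fin m)) {T : ℝ} (hT : 0 < T) :
    ∑ j ∈ s, |x j| / T * Real.log (|x j| / T / (σ j / T) ^ pstar p) ≤ pstar p - 1 := by
  have abs_eq (j : Fin m) : |x j| / T = |x j / σ j| * (σ j / T) := by
    rw [abs_div, abs_of_pos (hσ j), ← mul_div_assoc, div_mul_cancel₀ _ (hσ j).ne']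
  have τ_pos (j : Fin m) : 0 < σ j / T := div_pos (hσ j) hT
  simp_rw [abs_eq]
  rcases eq_or_ne p ∞ with rfl | hp_top
  · rw [pstar_top, sub_self]
    refine Finset.sum_nonpos fun j _ => ?_
    rw [Real.rpow_one, mul_div_cancel_right₀ _ (τ_pos j).ne']
    exact mul_nonpos_of_nonneg_of_nonpos (mul_nonneg (abs_nonneg _) (τ_pos j).le)
      (Real.log_nonpos (abs_nonneg _) (abs_le_one_of_lpnorm_top_le_one hx j))
  · calc ∑ j ∈ s, |x j / σ j| * (σ j / T) *
          Real.log (|x j / σ j| * (σ j / T) / (σ j / T) ^ pstar p)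
        ≤ ∑ j ∈ s, (pstar p - 1) * |x j / σ j| ^ p.toReal := Finset.sum_le_sum fun j _ =>
          mul_log_div_rpow_le (holderConjugate_pstar hp hp_top) (abs_nonneg _) (τ_pos j)
      _ ≤ pstar p - 1 := by
          rw [← Finset.mul_sum]
          exact mul_le_of_le_one_right (sub_nonneg.2 (one_le_pstar hp))
            (sum_rpow_le_one_of_lpnorm_le_one (zero_lt_one.trans hp).ne' hp_top hx s)

lemma radq_two_le_dualNorm_univ (hp : 1 < p) (hσ : ∀ j, 0 < σ j) (V : Set (Fin m → ℝ)) :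
    radq 2 (ellipsoid p σ) V ≤ dualNorm p σ Finset.univ := by
  refine Real.sSup_le ?_ (dualNorm_nonneg (fun j => (hσ j).le) _)
  rintro _ ⟨x, ⟨hx, -⟩, rfl⟩
  refine le_trans ?_ (sum_abs_le_dualNorm hp hσ hx Finset.univ)
  rw [lpnorm_two, EuclideanSpace.norm_eq]
  refine Real.sqrt_le_iff.2 ⟨Finset.sum_nonneg fun j _ => abs_nonneg _, ?_⟩
  exact Finset.sum_sq_le_sq_sum_of_nonneg fun j _ => abs_nonneg _

end Ellipsoid

section CoordinatePrior

lemma sum_abs_le_sqrt_mul_norm {ι : Type*} [Fintype ι] {H : Finset ι} {k : ℕ}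
    (hH : H.card ≤ k) (x : EuclideanSpace ℝ ι) :
    ∑ j ∈ H, |x j| ≤ √k * ‖x‖ := by
  have cauchy_schwarz := sq_sum_le_card_mul_sum_sq (s := H) (f := fun j => |x j|)
  have head_le : ∑ j ∈ H, |x j| ^ 2 ≤ ‖x‖ ^ 2 := by
    rw [EuclideanSpace.norm_sq_eq]
    exact Finset.sum_le_univ_sum_of_nonneg fun j => sq_nonneg _
  refine abs_le_of_sq_le_sq' ?_ (by positivity) |>.2
  rw [mul_pow, Real.sq_sqrt k.cast_nonneg]
  exact cauchy_schwarz.trans (mul_le_mul (Nat.cast_le.2 hH) head_le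
    (Finset.sum_nonneg fun j _ => sq_nonneg _) k.cast_nonneg)

variable {ι : Type*} [DecidableEq ι] {H : Finset ι} {k : ℕ}

/-- The coordinate weights that are uniform at height `1/k` on the head `H` and equal to `v` on the
remaining coordinates. -/
noncomputable def coordinatePrior (H : Finset ι) (k : ℕ) (v : ι → ℝ) (j : ι) : ℝ :=
  if j ∈ H then (k : ℝ)⁻¹ else v j

lemma coordinatePrior_pos (hk : 0 < k) {v : ι → ℝ} (hv : ∀ j ∉ H, 0 < v j) (j : ι) :
    0 < coordinatePrior H k v j := by
  rw [coordinatePrior]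
  split_ifs with hj
  · positivity
  · exact hv j hj

variable [Fintype ι]

lemma sum_coordinatePrior_le_two (hH : H.card ≤ k) {v : ι → ℝ} (hv : ∑ j ∈ Hᶜ, v j ≤ 1) :
    ∑ j, coordinatePrior H k v j ≤ 2 := by
  have head : ∑ j ∈ H, coordinatePrior H k v j ≤ 1 := by
    rw [Finset.sum_congr rfl fun j hj => show coordinatePrior H k v j = (k : ℝ)⁻¹ from if_pos hj,
      Finset.sum_const, nsmul_eq_mul, ← div_eq_mul_inv]
    exact div_le_one_of_le₀ (Nat.cast_le.2 hH) k.cast_nonneg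
  have tail : ∑ j ∈ Hᶜ, coordinatePrior H k v j = ∑ j ∈ Hᶜ, v j :=
    Finset.sum_congr rfl fun j hj => if_neg (Finset.mem_compl.1 hj)
  rw [← Finset.sum_add_sum_compl H]
  linarith

-- `log z ≤ z` on the head turns the entropy into `k ∑ y_j²`.
lemma sum_abs_mul_log_coordinatePrior_le (y : EuclideanSpace ℝ ι) (v : ι → ℝ) :
    ∑ j, |y j| * Real.log (|y j| / coordinatePrior H k v j) ≤
      k * ‖y‖ ^ 2 + ∑ j ∈ Hᶜ, |y j| * Real.log (|y j| / v j) := by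
  have head : ∑ j ∈ H, |y j| * Real.log (|y j| / coordinatePrior H k v j) ≤ k * ‖y‖ ^ 2 := by
    rw [EuclideanSpace.norm_sq_eq, Finset.mul_sum]
    refine le_trans (Finset.sum_le_sum fun j hj => ?_)
      (Finset.sum_le_univ_sum_of_nonneg fun j => by positivity)
    rw [coordinatePrior, if_pos hj, div_inv_eq_mul, Real.norm_eq_abs]
    calc |y j| * Real.log (|y j| * k) ≤ |y j| * (|y j| * k) := by
          gcongr
          exact Real.log_le_self (by positivity)
      _ = k * |y j| ^ 2 := by ring
  have tail : ∑ j ∈ Hᶜ, |y j| * Real.log (|y j| / coordinatePrior H k v j) =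
      ∑ j ∈ Hᶜ, |y j| * Real.log (|y j| / v j) :=
    Finset.sum_congr rfl fun j hj => by rw [coordinatePrior, if_neg (Finset.mem_compl.1 hj)]
  rw [← Finset.sum_add_sum_compl H]
  linarith

end CoordinatePrior

lemma mul_mul_log_le_mul_mul_log {t w l : ℝ} (ht : 0 ≤ t) (hw : 0 < w) (hl0 : 0 ≤ l)
    (hl1 : l ≤ 1) : l * t * Real.log (l * t / w) ≤ l * (t * Real.log (t / w)) := by
  rcases hl0.eq_or_lt with rfl | hl
  · simp
  rcases ht.eq_or_lt with rfl | ht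
  · simp
  rw [mul_assoc]
  gcongr
  exact mul_le_of_le_one_left ht.le hl1

lemma abs_inv_smul_toLp_apply {ι : Type*} {D : ℝ} (hD : 0 ≤ D) (x : ι → ℝ) (j : ι) :
    |(D⁻¹ • WithLp.toLp 2 x) j| = |x j| / D := by
  rw [PiLp.smul_apply, smul_eq_mul, abs_mul, abs_of_nonneg (inv_nonneg.2 hD), inv_mul_eq_div]

lemma sum_abs_inv_smul_toLp_le_one {ι : Type*} [Fintype ι] {D : ℝ} (hD : 0 < D) {x : ι → ℝ}
    (hx : ∑ j, |x j| ≤ D) : ∑ j, |(D⁻¹ • WithLp.toLp 2 x) j| ≤ 1 := by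
  simp_rw [abs_inv_smul_toLp_apply hD.le, ← Finset.sum_div]
  exact div_le_one_of_le₀ hx hD.le

section KernelSection

variable {p : ℝ≥0∞} {m : ℕ} {σ : Fin m → ℝ} {H : Finset (Fin m)} {k : ℕ}

/-- The prior on `signedUnitVector` adapted to the ellipsoid with semiaxes `σ` and to the head `H`:
its tail weights `(σ_j / T)^{p*}`, with `T` the dual norm of the tail, sum to at most `1`. -/
noncomputable def ellipsoidPrior (p : ℝ≥0∞) (σ : Fin m → ℝ) (H : Finset (Fin m)) (k : ℕ) :
    Option (Fin m × Bool) → ℝ :=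
  signedPrior (coordinatePrior H k fun j => (σ j / dualNorm p σ Hᶜ) ^ pstar p)

lemma div_dualNorm_compl_rpow_pos (hσ : ∀ j, 0 < σ j) {j : Fin m} (hj : j ∉ H) :
    0 < (σ j / dualNorm p σ Hᶜ) ^ pstar p :=
  Real.rpow_pos_of_pos (div_pos (hσ j) (dualNorm_pos hσ ⟨j, Finset.mem_compl.2 hj⟩)) _

lemma ellipsoidPrior_pos (hσ : ∀ j, 0 < σ j) (hk : 0 < k) (ω : Option (Fin m × Bool)) :
    0 < ellipsoidPrior p σ H k ω :=
  signedPrior_pos (coordinatePrior_pos hk fun _ => div_dualNorm_compl_rpow_pos hσ) ω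

lemma sum_ellipsoidPrior_le_one (hp : 1 < p) (hσ : ∀ j, 0 < σ j) (hH : H.card ≤ k) :
    ∑ ω, ellipsoidPrior p σ H k ω ≤ 1 :=
  sum_signedPrior_le_one
    (sum_coordinatePrior_le_two hH (sum_div_dualNorm_rpow_le_one hp (fun j => (hσ j).le) _))

variable {x : Fin m → ℝ}

lemma sum_tail_abs_mul_log_le (hp : 1 < p) (hσ : ∀ j, 0 < σ j) (hx : x ∈ ellipsoid p σ) {D : ℝ}
    (hD : 0 < D) (hTD : 2 * dualNorm p σ Hᶜ ≤ D) :
    ∑ j ∈ Hᶜ, |x j| / D * Real.log (|x j| / D / (σ j / dualNorm p σ Hᶜ) ^ pstar p) ≤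
      (pstar p - 1) / 2 := by
  have hq := one_le_pstar hp
  rcases Hᶜ.eq_empty_or_nonempty with hempty | hne
  · rw [hempty, Finset.sum_empty]
    linarith
  set T := dualNorm p σ Hᶜ
  have hT : 0 < T := dualNorm_pos hσ hne
  have ratio_le : T / D ≤ 1 / 2 := by
    rw [div_le_iff₀ hD]
    linarith
  have abs_eq (j : Fin m) : |x j| / D = T / D * (|x j| / T) := by
    field_simp
  calc ∑ j ∈ Hᶜ, |x j| / D * Real.log (|x j| / D / (σ j / T) ^ pstar p)
      ≤ ∑ j ∈ Hᶜ, T / D * (|x j| / T * Real.log (|x j| / T / (σ j / T) ^ pstar p)) := by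
        refine Finset.sum_le_sum fun j hj => ?_
        rw [abs_eq]
        exact mul_mul_log_le_mul_mul_log (by positivity)
          (div_dualNorm_compl_rpow_pos hσ (Finset.mem_compl.1 hj)) (by positivity) (by linarith)
    _ ≤ T / D * (pstar p - 1) := by
        rw [← Finset.mul_sum]
        gcongr
        exact sum_abs_div_mul_log_le hp hσ hx _ hT
    _ ≤ (pstar p - 1) / 2 := by nlinarith

lemma log_six_le : Real.log 6 ≤ 21 / 10 :=
  calc Real.log 6 ≤ Real.log (2 ^ 3) := Real.log_le_log (by norm_num) (by norm_num)
    _ = 3 * Real.log 2 := mod_cast Real.log_pow 2 3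
    _ ≤ 21 / 10 := by linarith [Real.log_two_lt_d9]

lemma sum_abs_le_two_mul_sqrt_mul_norm (hp : 1 < p) (hσ : ∀ j, 0 < σ j) (hx : x ∈ ellipsoid p σ)
    (hH : H.card ≤ k) (hT : dualNorm p σ Hᶜ ≤ √k * ‖WithLp.toLp 2 x‖) :
    ∑ j, |x j| ≤ 2 * √k * ‖WithLp.toLp 2 x‖ := by
  have head := sum_abs_le_sqrt_mul_norm hH (WithLp.toLp 2 x)
  have tail := sum_abs_le_dualNorm hp hσ hx Hᶜ
  rw [← Finset.sum_add_sum_compl H]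
  linarith

lemma relEntropy_signedPosterior_ellipsoidPrior_le (hp : 1 < p) (hσ : ∀ j, 0 < σ j)
    (hx : x ∈ ellipsoid p σ) (hk : 0 < k) {D : ℝ} (hD : 0 < D)
    (hnorm : 2 * √k * ‖WithLp.toLp 2 x‖ ≤ D) (hsum : ∑ j, |x j| ≤ D)
    (hT : 2 * dualNorm p σ Hᶜ ≤ D) :
    relEntropy (signedPosterior (D⁻¹ • WithLp.toLp 2 x)) (ellipsoidPrior p σ H k) ≤
      3 * pstar p := by
  have head_le : k * ‖D⁻¹ • WithLp.toLp 2 x‖ ^ 2 ≤ 1 / 4 := by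
    have hsq := pow_le_pow_left₀ (by positivity) hnorm 2
    rw [mul_pow, mul_pow, Real.sq_sqrt k.cast_nonneg] at hsq
    rw [norm_smul, Real.norm_of_nonneg (inv_nonneg.2 hD.le), mul_pow, inv_pow]
    field_simp
    linarith
  have tail_le := sum_tail_abs_mul_log_le hp hσ hx hD hT
  have entropy_le := relEntropy_signedPosterior_signedPrior_le
    (sum_abs_inv_smul_toLp_le_one hD hsum)
    (coordinatePrior_pos hk fun _ => div_dualNorm_compl_rpow_pos (p := p) (H := H) hσ)
  have split_le := sum_abs_mul_log_coordinatePrior_le (H := H) (k := k) (D⁻¹ • WithLp.toLp 2 x)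
    fun j => (σ j / dualNorm p σ Hᶜ) ^ pstar p
  simp_rw [abs_inv_smul_toLp_apply hD.le] at entropy_le split_le
  rw [ellipsoidPrior]
  linarith [log_six_le, one_le_pstar hp]

lemma lpnorm_two_le_of_mem_kerSet {n : ℕ} (hp : 1 < p) (hσ : ∀ j, 0 < σ j) (hk : 0 < k)
    (hH : H.card ≤ k) (hkn : k * pstar p ≤ n / 30000) {A : Fin n → Fin m → ℝ}
    (hA : ∀ ρ ∈ stdSimplex ℝ (Option (Fin m × Bool)),
      (1000 * k : ℕ) * relEntropy ρ (ellipsoidPrior p σ H k) ≤ n / 10 →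
      ‖∑ ω, ρ ω • (2 * √k) • signedUnitVector ω‖ = 1 →
        (Matrix.of A).toEuclideanLin (∑ ω, ρ ω • (2 * √k) • signedUnitVector ω) ≠ 0)
    (hx : x ∈ ellipsoid p σ) (hxA : x ∈ kerSet A) :
    lpnorm 2 x ≤ dualNorm p σ Hᶜ / √k := by
  have hL : 0 < √(k : ℝ) := Real.sqrt_pos.2 (Nat.cast_pos.2 hk)
  by_contra! hlt
  rw [lpnorm_two, div_lt_iff₀' hL] at hlt
  set X := WithLp.toLp 2 x
  have hr : 0 < ‖X‖ :=
    pos_of_mul_pos_right ((dualNorm_nonneg (fun j => (hσ j).le) _).trans_lt hlt) hL.le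
  set D := 2 * √k * ‖X‖ with hD_def
  have hD : 0 < D := by positivity
  have sum_le := sum_abs_le_two_mul_sqrt_mul_norm hp hσ hx hH hlt.le
  have entropy_le := relEntropy_signedPosterior_ellipsoidPrior_le (H := H) hp hσ hx hk hD le_rfl
    sum_le (by linarith)
  have barycenter : ∑ ω, signedPosterior (D⁻¹ • X) ω • (2 * √k) • signedUnitVector ω =
      ‖X‖⁻¹ • X := by
    simp_rw [smul_comm _ (2 * √(k : ℝ)), ← Finset.smul_sum]
    rw [sum_signedPosterior_smul_signedUnitVector, smul_smul]
    congr 1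
    rw [hD_def]
    field_simp
  refine hA (signedPosterior (D⁻¹ • X))
    (signedPosterior_mem_stdSimplex (sum_abs_inv_smul_toLp_le_one hD sum_le)) ?_ ?_ ?_
  · push_cast
    nlinarith
  · rw [barycenter, norm_smul, norm_inv, norm_norm, inv_mul_cancel₀ hr.ne']
  · rw [barycenter, map_smul, mem_kerSet_iff_toEuclideanLin.1 hxA, smul_zero]

theorem gaussianMatrix_radq_two_le {n : ℕ} (hp : 1 < p) (hσ : ∀ j, 0 < σ j)
    (hk : 0 < k) (hH : H.card ≤ k) (hkn : k * pstar p ≤ n / 30000) :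
    ENNReal.ofReal (1 - 2 * Real.exp (-(1 / 20) * n)) ≤ gaussianMatrix n m
      {A | radq 2 (ellipsoid p σ) (kerSet A) ≤ dualNorm p σ Hᶜ / √k} := by
  have hn : 0 < n := by
    have : 0 < k * pstar p :=
      mul_pos (Nat.cast_pos.2 hk) (zero_lt_one.trans_le (one_le_pstar hp))
    exact_mod_cast (show (0 : ℝ) < n by linarith)
  have scale_sq : (2 * √(k : ℝ)) ^ 2 ≤ (1000 * k : ℕ) / 250 := by
    rw [mul_pow, Real.sq_sqrt k.cast_nonneg]
    push_cast
    linarith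
  refine (gaussianMatrix_toEuclideanLin_ne_zero (N := 1000 * k) hn (by omega)
    (ellipsoidPrior_pos hσ hk) (sum_ellipsoidPrior_le_one hp hσ hH)
    norm_signedUnitVector_le_one scale_sq).trans (measure_mono fun A hA => ?_)
  refine Real.sSup_le ?_ (div_nonneg (dualNorm_nonneg (fun j => (hσ j).le) _) (Real.sqrt_nonneg _))
  rintro _ ⟨x, ⟨hx, hxA⟩, rfl⟩
  exact lpnorm_two_le_of_mem_kerSet hp hσ hk hH hkn hA hx hxA

end KernelSection

lemma card_filter_succ_lt_le (m k : ℕ) :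
    (Finset.univ.filter fun j : Fin m => (j : ℕ) + 1 < k).card ≤ k := by
  rw [← Finset.card_range k]
  exact Finset.card_le_card_of_injOn (fun j => (j : ℕ))
    (fun j hj => by simpa using Nat.lt_of_succ_lt (by simpa using hj)) Fin.val_injective.injOn

lemma sum_ite_le_eq_dualNorm (p : ℝ≥0∞) {m : ℕ} (σ : Fin m → ℝ) (k : ℕ) :
    (∑ j : Fin m, if k ≤ (j : ℕ) + 1 then σ j ^ pstar p else 0) ^ (1 / pstar p) =
      dualNorm p σ (Finset.univ.filter fun j : Fin m => (j : ℕ) + 1 < k)ᶜ := by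
  rw [dualNorm, Finset.compl_filter, ← Finset.sum_filter]
  simp_rw [not_lt]

lemma inv_sqrt_le_of_le_mul {n k q : ℝ} (hn : 0 < n) (hk : 0 < k) (h : n ≤ 60000 * (q * k)) :
    (√k)⁻¹ ≤ 300 * √q * n ^ (-(1 / 2) : ℝ) := by
  have hsqrt : √n ≤ 300 * √q * √k :=
    calc √n ≤ √(300 ^ 2 * (q * k)) := Real.sqrt_le_sqrt (by linarith)
      _ = 300 * √q * √k := by
        rw [Real.sqrt_mul (sq_nonneg _), Real.sqrt_sq (by norm_num),
          Real.sqrt_mul' q hk.le, mul_assoc]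
  rwa [Real.rpow_neg hn.le, ← Real.sqrt_eq_rpow, ← div_eq_mul_inv,
    le_div_iff₀ (Real.sqrt_pos.2 hn), inv_mul_le_iff₀' (Real.sqrt_pos.2 hk)]

lemma gaussianMatrix_radq_two_le_tail {p : ℝ≥0∞} {m n k : ℕ} {σ : Fin m → ℝ}
    (hp : 1 < p) (hσ : ∀ j, 0 < σ j) (hk : k = max 1 ⌈1 / 60000 * n / pstar p⌉₊) :
    ENNReal.ofReal (1 - 2 * Real.exp (-(1 / 20) * n)) ≤ gaussianMatrix n m
      {A | radq 2 (ellipsoid p σ) (kerSet A) ≤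
        dualNorm p σ (Finset.univ.filter fun j : Fin m => (j : ℕ) + 1 < k)ᶜ / √k} := by
  have hq : 0 < pstar p := zero_lt_one.trans_le (one_le_pstar hp)
  rcases le_or_gt (1 / 60000 * n / pstar p) 1 with hsmall | hlarge
  · have hk_one : k = 1 := hk.trans (max_eq_left (Nat.ceil_le.2 (mod_cast hsmall)))
    have huniv : (Finset.univ.filter fun j : Fin m => (j : ℕ) + 1 < k)ᶜ = Finset.univ := by
      simp [hk_one]
    rw [huniv, hk_one, Nat.cast_one, Real.sqrt_one, div_one]
    simp only [radq_two_le_dualNorm_univ hp hσ, Set.ofPred_true, measure_univ]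
    exact ENNReal.ofReal_le_one.2 (by linarith [Real.exp_pos (-(1 / 20) * n)])
  · rw [max_eq_right (Nat.one_le_ceil_iff.2 (one_pos.trans hlarge))] at hk
    refine gaussianMatrix_radq_two_le hp hσ (hk ▸ Nat.ceil_pos.2 (one_pos.trans hlarge))
      (card_filter_succ_lt_le m k) ?_
    have hk_lt : (k : ℝ) < 1 / 60000 * n / pstar p + 1 :=
      hk ▸ Nat.ceil_lt_add_one (one_pos.trans hlarge).le
    calc k * pstar p ≤ 2 * (1 / 60000 * n / pstar p) * pstar p := by gcongr; linarith
      _ = n / 30000 := by field_simp; ring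

theorem statement0_general :
    ∃ C c c₁ c₂ : ℝ, 0 < C ∧ 0 < c ∧ 0 < c₁ ∧ 0 < c₂ ∧
      ∀ (p : ℝ≥0∞), 1 < p → ∀ (m n : ℕ), 1 ≤ n → ∀ σ : Fin m → ℝ, (∀ j, 0 < σ j) →
      ENNReal.ofReal (1 - c₁ * Real.exp (-c₂ * n)) ≤
        gaussianMatrix n m {A |
          radq 2 (ellipsoid p σ) (kerSet A) ≤
            C * Real.sqrt (pstar p) * (n : ℝ) ^ (-(1 / 2 : ℝ)) *
              (∑ j : Fin m,
                  if max 1 ⌈c * n / pstar p⌉₊ ≤ (j : ℕ) + 1 then σ j ^ pstar p else 0) ^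
                (1 / pstar p)} := by
  refine ⟨300, 1 / 60000, 2, 1 / 20, by norm_num, by norm_num, two_pos, by norm_num, ?_⟩
  intro p hp m n hn σ hσ
  rw [sum_ite_le_eq_dualNorm]
  set k := max 1 ⌈1 / 60000 * n / pstar p⌉₊ with hk
  have hk_pos : 0 < k := one_pos.trans_le (le_max_left _ _)
  have hn_le : 1 / 60000 * n ≤ k * pstar p := by
    rw [← div_le_iff₀ (zero_lt_one.trans_le (one_le_pstar hp))]
    exact (Nat.le_ceil _).trans (mod_cast le_max_right 1 ⌈1 / 60000 * n / pstar p⌉₊)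
  refine (gaussianMatrix_radq_two_le_tail hp hσ hk).trans
    (measure_mono fun A hA => (Set.mem_ofPred.1 hA).trans ?_)
  rw [div_eq_inv_mul]
  exact mul_le_mul_of_nonneg_right
    (inv_sqrt_le_of_le_mul (mod_cast hn) (mod_cast hk_pos) (by linarith))
    (dualNorm_nonneg (fun j => (hσ j).le) _)

/-- For `1 < p ≤ ∞`, with probability at least `1 - c₁ exp(-c₂ n)` the
circumradius of the section of the `ℓ_p`-ellipsoid with the kernel of a Gaussian random matrix
is at most `C √(p*) n^{-1/2} (∑_{j=k}^m σ_j^{p*})^{1/p*}` with `k = max(1, ⌈c n / p*⌉)`.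
(Here `σ : Fin m → ℝ` is 0-indexed, i.e. `σ ⟨j-1⟩` is the paper's `σ_j`.) -/
theorem statement0 :
    ∃ C c c₁ c₂ : ℝ, 0 < C ∧ 0 < c ∧ 0 < c₁ ∧ 0 < c₂ ∧
      ∀ (p : ℝ≥0∞), 1 < p →
      ∀ (m n : ℕ), 1 ≤ n → n < m →
      ∀ σ : Fin m → ℝ, (∀ j, 0 < σ j) → (∀ i j : Fin m, i ≤ j → σ j ≤ σ i) →
      ENNReal.ofReal (1 - c₁ * Real.exp (-c₂ * n)) ≤
        gaussianMatrix n m {A |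
          radq 2 (ellipsoid p σ) (kerSet A) ≤
            C * Real.sqrt (pstar p) * (n : ℝ) ^ (-(1 / 2 : ℝ)) *
              (∑ j : Fin m,
                  if max 1 ⌈c * n / pstar p⌉₊ ≤ (j : ℕ) + 1 then σ j ^ pstar p else 0) ^
                (1 / pstar p)} := by
  obtain ⟨C, c, c₁, c₂, hC, hc, hc₁, hc₂, h⟩ := statement0_general
  exact ⟨C, c, c₁, c₂, hC, hc, hc₁, hc₂, fun p hp m n hn _ σ hσ _ => h p hp m n hn σ hσ⟩
end

section
/- Let 0 < p ≤ 1 and λ > 0, and set σ_j = j^{−λ} for j ∈ ℕ. There exist constants C, D, K ∈ (0,∞), with K depending only on p and λ, such that for all m ∈ ℕ and all 1 ≤ n < m satisfying n ≥ D·log(e·m/n), if G_{n,m} is an n×m random matrix with i.i.d. standard Gaussian entries, then with probability at least 1 − 2·exp(−C·n) one has rad(E^m_{p,σ}, ker G_{n,m}) ≤ K·(log(e·m/n)/n)^{λ + 1/p − 1/2}. -/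
open MeasureTheory ProbabilityTheory
open scoped ENNReal NNReal

/-!
Let `β = λ + 1/p`. A member `x` of the ellipsoid with `k` coordinates of absolute value at least
`t` has at least `k/2` of them at indices `j ≥ k/2`, where `σ_j ≤ (k/2)^(-λ)`; its quasi-norm then
forces `t ≤ (2/k)^β`, so the decreasing rearrangement of `x` decays like `(2/k)^β`.

With overwhelming probability the Gaussian matrix distorts all `s`-sparse vectors by factors
between `√n/20` and `4√n`, where `s` is of order `n / log(em/n)`: for a fixed vector this is the
Chernoff bound for the chi-square distribution, on a coordinate subspace a finite net suffices,
and the exponent `n` beats the `(em/s)^s` supports and the `65^s` net points of each.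

If `x` lies in the kernel, cut it into blocks of `s` coordinates by decreasing absolute value. The
image of the first block is minus the sum of the images of the others, so `‖x‖` is at most `81`
times the sum of the norms of the later blocks. The `i`-th of these is at most `√s (2/(is))^β`,
and the sum converges because `β > 1`, giving a bound of order `s^(1/2 - β)`.
-/

section ChiSquare

open Real

lemma gaussianPDFReal_mul_exp_mul_sq (t x : ℝ) :
    gaussianPDFReal 0 1 x * exp (t * x ^ 2) = (√(2 * π))⁻¹ * exp (-(1 / 2 - t) * x ^ 2) := by
  simp only [gaussianPDFReal, NNReal.coe_one, mul_one, sub_zero]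
  rw [mul_assoc, ← exp_add]
  congr 2
  ring

lemma integrable_exp_mul_sq_gaussianReal {t : ℝ} (ht : t < 1 / 2) :
    Integrable (fun x ↦ exp (t * x ^ 2)) (gaussianReal 0 1) := by
  rw [gaussianReal_of_var_ne_zero _ one_ne_zero,
    integrable_withDensity_iff_integrable_smul' (by fun_prop) (by simp [gaussianPDF])]
  simp only [toReal_gaussianPDF, smul_eq_mul, gaussianPDFReal_mul_exp_mul_sq]
  exact (integrable_exp_neg_mul_sq (by linarith)).const_mul _

lemma mgf_sq_gaussianReal {t : ℝ} (ht : t < 1 / 2) :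
    mgf (fun x ↦ x ^ 2) (gaussianReal 0 1) t = (√(1 - 2 * t))⁻¹ := by
  have ht' : 1 - 2 * t ≠ 0 := by linarith
  rw [mgf, integral_gaussianReal_eq_integral_smul one_ne_zero]
  simp only [smul_eq_mul, gaussianPDFReal_mul_exp_mul_sq]
  rw [integral_const_mul, integral_gaussian, ← sqrt_inv, ← sqrt_inv, ← sqrt_mul (by positivity)]
  congr 1
  field_simp

variable {ι : Type*} [Fintype ι] {t : ℝ}

lemma exp_mul_sum_sq_eq_prod (t : ℝ) (g : ι → ℝ) :
    exp (t * ∑ i, g i ^ 2) = ∏ i, exp (t * g i ^ 2) := by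
  rw [Finset.mul_sum, exp_sum]

lemma integrable_exp_mul_sum_sq_pi_gaussianReal (ht : t < 1 / 2) :
    Integrable (fun g : ι → ℝ ↦ exp (t * ∑ i, g i ^ 2))
      (Measure.pi fun _ ↦ gaussianReal 0 1) := by
  simp only [exp_mul_sum_sq_eq_prod]
  exact .fintype_prod fun _ ↦ integrable_exp_mul_sq_gaussianReal ht

lemma mgf_sum_sq_pi_gaussianReal (ht : t < 1 / 2) :
    mgf (fun g : ι → ℝ ↦ ∑ i, g i ^ 2) (Measure.pi fun _ ↦ gaussianReal 0 1) t =
      (√(1 - 2 * t))⁻¹ ^ Fintype.card ι := by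
  simp only [mgf, exp_mul_sum_sq_eq_prod]
  rw [integral_fintype_prod_eq_pow fun x ↦ exp (t * x ^ 2), ← mgf_sq_gaussianReal ht, mgf]

lemma measureReal_nine_mul_card_le_sum_sq :
    (Measure.pi fun _ : ι ↦ gaussianReal 0 1).real {g | 9 * Fintype.card ι ≤ ∑ i, g i ^ 2} ≤
      exp (-Fintype.card ι) := by
  have hsqrt : (√(1 - 2 * (1 / 4)))⁻¹ ≤ exp (5 / 4) := by
    rw [← sqrt_inv]
    calc √(1 - 2 * (1 / 4))⁻¹ ≤ 2 := by rw [sqrt_le_left (by norm_num)]; norm_num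
      _ ≤ exp (5 / 4) := by linarith [add_one_le_exp (5 / 4)]
  calc _ ≤ exp (-(1 / 4) * (9 * Fintype.card ι)) * (√(1 - 2 * (1 / 4)))⁻¹ ^ Fintype.card ι := by
        rw [← mgf_sum_sq_pi_gaussianReal (by norm_num)]
        exact measure_ge_le_exp_mul_mgf _ (by norm_num)
          (integrable_exp_mul_sum_sq_pi_gaussianReal (by norm_num))
    _ ≤ exp (-(1 / 4) * (9 * Fintype.card ι)) * exp (5 / 4) ^ Fintype.card ι := by gcongr
    _ = exp (-Fintype.card ι) := by rw [← exp_nat_mul, ← exp_add]; ring_nf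

lemma measureReal_sum_sq_le_card_div :
    (Measure.pi fun _ : ι ↦ gaussianReal 0 1).real {g | ∑ i, g i ^ 2 ≤ Fintype.card ι / 25} ≤
      exp (-Fintype.card ι) := by
  have hsqrt : (√(1 - 2 * (-12)))⁻¹ ≤ exp (-(3 / 2)) := by
    rw [exp_neg]
    refine inv_anti₀ (exp_pos _) (le_sqrt_of_sq_le ?_)
    calc exp (3 / 2) ^ 2 = exp 1 ^ 3 := by rw [← exp_nat_mul, ← exp_nat_mul]; norm_num
      _ ≤ 2.8 ^ 3 := by gcongr; linarith [exp_one_lt_d9]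
      _ ≤ 1 - 2 * (-12) := by norm_num
  calc _ ≤ exp (-(-12) * (Fintype.card ι / 25)) * (√(1 - 2 * (-12)))⁻¹ ^ Fintype.card ι := by
        rw [← mgf_sum_sq_pi_gaussianReal (by norm_num)]
        exact measure_le_le_exp_mul_mgf _ (by norm_num)
          (integrable_exp_mul_sum_sq_pi_gaussianReal (by norm_num))
    _ ≤ exp (-(-12) * (Fintype.card ι / 25)) * exp (-(3 / 2)) ^ Fintype.card ι := by gcongr
    _ = exp (-(51 / 50 * Fintype.card ι)) := by rw [← exp_nat_mul, ← exp_add]; ring_nf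
    _ ≤ exp (-Fintype.card ι) := by
        gcongr
        linarith [Nat.cast_nonneg (α := ℝ) (Fintype.card ι)]

end ChiSquare

section GaussianMatrix

open Matrix WithLp

variable {ι : Type*} [Fintype ι] {m n : ℕ}

lemma map_dotProduct_pi_gaussianReal (y : EuclideanSpace ℝ ι) :
    (Measure.pi fun _ : ι ↦ gaussianReal 0 1).map (fun a ↦ a ⬝ᵥ ofLp y) =
      gaussianReal 0 (‖y‖₊ ^ 2) := by
  have hcomp : (fun a : ι → ℝ ↦ a ⬝ᵥ ofLp y) = innerSL ℝ y ∘ toLp 2 := by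
    ext a
    simp [EuclideanSpace.inner_eq_star_dotProduct]
  rw [hcomp, ← Measure.map_map (by fun_prop) (by fun_prop), map_pi_eq_stdGaussian,
    IsGaussian.map_eq_gaussianReal, integral_strongDual_stdGaussian, variance_dual_stdGaussian,
    innerSL_apply_norm, Real.toNNReal_pow (norm_nonneg y), norm_toNNReal]

instance inst_s2 : IsProbabilityMeasure (gaussianMatrix n m) := by
  unfold gaussianMatrix
  infer_instance

lemma map_mulVec_gaussianMatrix (y : EuclideanSpace ℝ (Fin m)) :
    (gaussianMatrix n m).map (fun A ↦ of A *ᵥ ofLp y) =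
      (Measure.pi fun _ ↦ gaussianReal 0 1).map (fun g ↦ ‖y‖ • g) := by
  calc (gaussianMatrix n m).map (fun A ↦ of A *ᵥ ofLp y)
      = Measure.pi fun _ ↦ gaussianReal 0 (‖y‖₊ ^ 2) := by
        simp only [← map_dotProduct_pi_gaussianReal]
        exact Measure.pi_map_pi (f := fun _ a ↦ a ⬝ᵥ ofLp y) fun _ ↦ by fun_prop
    _ = Measure.pi fun _ ↦ (gaussianReal 0 1).map (‖y‖ * ·) := by
        simp only [gaussianReal_map_const_mul, mul_zero, mul_one]
        rfl
    _ = _ := (Measure.pi_map_pi (f := fun _ x ↦ ‖y‖ * x) fun _ ↦ by fun_prop).symm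

lemma measureReal_norm_toLp_notMem_Icc :
    (Measure.pi fun _ : ι ↦ gaussianReal 0 1).real
        {g | ‖toLp 2 g‖ ∉ Set.Icc (√(Fintype.card ι) / 5) (3 * √(Fintype.card ι))} ≤
      2 * Real.exp (-Fintype.card ι) := by
  have hsq (g : ι → ℝ) : ∑ i, g i ^ 2 = ‖toLp 2 g‖ ^ 2 := by
    rw [EuclideanSpace.real_norm_sq_eq]
  have hn : √(Fintype.card ι) ^ 2 = Fintype.card ι := Real.sq_sqrt (Nat.cast_nonneg _)
  have hsub : {g : ι → ℝ | ‖toLp 2 g‖ ∉ Set.Icc (√(Fintype.card ι) / 5) (3 * √(Fintype.card ι))} ⊆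
      {g | ∑ i, g i ^ 2 ≤ Fintype.card ι / 25} ∪ {g | 9 * Fintype.card ι ≤ ∑ i, g i ^ 2} := by
    intro g hg
    simp only [Set.mem_union, Set.mem_ofPred_eq, Set.mem_Icc, not_and_or, not_le, hsq] at hg ⊢
    refine hg.imp (fun h ↦ ?_) fun h ↦ ?_
    · linarith [pow_le_pow_left₀ (norm_nonneg _) h.le 2]
    · linarith [pow_le_pow_left₀ (by positivity) h.le 2]
  calc _ ≤ _ := measureReal_mono hsub
    _ ≤ _ := measureReal_union_le _ _
    _ ≤ _ := by
      rw [two_mul]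
      exact add_le_add measureReal_sum_sq_le_card_div measureReal_nine_mul_card_le_sum_sq

lemma measureReal_norm_toEuclideanLin_notMem_Icc (y : EuclideanSpace ℝ (Fin m)) :
    (gaussianMatrix n m).real
        {A | ‖toEuclideanLin (of A) y‖ ∉ Set.Icc (√n / 5 * ‖y‖) (3 * √n * ‖y‖)} ≤
      2 * Real.exp (-n) := by
  set S : Set (Fin n → ℝ) := {z | ‖toLp 2 z‖ ∉ Set.Icc (√n / 5 * ‖y‖) (3 * √n * ‖y‖)}
  have hS : MeasurableSet S :=
    (measurableSet_Icc.preimage (f := fun z : Fin n → ℝ ↦ ‖toLp 2 z‖) (by fun_prop)).compl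
  calc _ = ((gaussianMatrix n m).map (fun A ↦ of A *ᵥ ofLp y)).real S := by
        rw [map_measureReal_apply (by unfold mulVec; fun_prop) hS]
        rfl
    _ = (Measure.pi fun _ ↦ gaussianReal 0 1).real {g | ‖y‖ • g ∈ S} := by
        rw [map_mulVec_gaussianMatrix, map_measureReal_apply (by fun_prop) hS]
        rfl
    _ ≤ (Measure.pi fun _ ↦ gaussianReal 0 1).real
          {g : Fin n → ℝ | ‖toLp 2 g‖ ∉ Set.Icc (√n / 5) (3 * √n)} := by
        refine measureReal_mono fun g hg h ↦ hg ?_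
        rw [toLp_smul, norm_smul, norm_norm, mul_comm ‖y‖]
        exact ⟨by gcongr; exact h.1, by gcongr; exact h.2⟩
    _ ≤ 2 * Real.exp (-n) := by simpa using measureReal_norm_toLp_notMem_Icc (ι := Fin n)

end GaussianMatrix

section Net

open Metric Module

lemma exists_norm_sub_le_of_isCover {E : Type*} [SeminormedAddCommGroup E] {ε : ℝ≥0}
    {A N : Set E} (hN : IsCover ε A N) {u : E} (hu : u ∈ A) : ∃ y ∈ N, ‖u - y‖ ≤ ε := by
  simpa [dist_eq_norm] using isCover_iff_subset_iUnion_closedBall.1 hN hu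

variable {E F : Type*} [NormedAddCommGroup E] [NormedSpace ℝ E] [NormedAddCommGroup F]
  [NormedSpace ℝ F] {ε : ℝ≥0} {N : Set E} {a b : ℝ}

section Packing

variable [FiniteDimensional ℝ E]

/- The balls of radius `ε / 2` around the points of `C` are disjoint and contained in the ball of
radius `1 + ε / 2`. -/
lemma encard_le_of_isSeparated_of_subset_closedBall (hε : 0 < ε) {C : Set E}
    (hC : IsSeparated ε C) (hsub : C ⊆ closedBall 0 1) :
    (C.encard : ℝ≥0∞) ≤ ENNReal.ofReal ((1 + 2 / ε) ^ finrank ℝ E) := by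
  borelize E
  have : (0 : ℝ) < ε := hε
  let μ : Measure E := Measure.addHaar
  have hdisj : Pairwise (Function.onFun Disjoint fun c : C ↦ ball (c : E) (ε / 2)) := by
    intro c d hcd
    have hsep : ε < edist (c : E) d := hC c.2 d.2 (Subtype.coe_ne_coe.2 hcd)
    rw [edist_nndist, ENNReal.coe_lt_coe, ← NNReal.coe_lt_coe, coe_nndist] at hsep
    exact ball_disjoint_ball (by linarith)
  have hball : ⋃ c : C, ball (c : E) (ε / 2) ⊆ ball 0 ((1 + 2 / ε) * (ε / 2)) := by
    refine Set.iUnion_subset fun c ↦ ball_subset_ball' ?_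
    have hc := mem_closedBall.1 (hsub c.2)
    field_simp
    linarith
  have hvol : C.encard * μ (ball 0 (ε / 2)) ≤
      ENNReal.ofReal ((1 + 2 / ε) ^ finrank ℝ E) * μ (ball 0 (ε / 2)) :=
    calc C.encard * μ (ball 0 (ε / 2)) = ∑' c : C, μ (ball (c : E) (ε / 2)) := by
          simp only [Measure.addHaar_ball_center, ENNReal.tsum_set_const]
      _ ≤ μ (⋃ c : C, ball (c : E) (ε / 2)) :=
          tsum_meas_le_meas_iUnion_of_disjoint μ (fun _ ↦ measurableSet_ball) hdisj
      _ ≤ μ (ball 0 ((1 + 2 / ε) * (ε / 2))) := measure_mono hball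
      _ = _ := μ.addHaar_ball_mul_of_pos 0 (by positivity) _
  exact (ENNReal.mul_le_mul_iff_left (measure_ball_pos μ _ (by positivity)).ne'
    measure_ball_lt_top.ne).1 hvol

lemma packingNumber_closedBall_le (hε : 0 < ε) :
    (packingNumber ε (closedBall (0 : E) 1) : ℝ≥0∞) ≤
      ENNReal.ofReal ((1 + 2 / ε) ^ finrank ℝ E) := by
  simp only [packingNumber, ENat.toENNReal_iSup, iSup_le_iff]
  exact fun C hsub hC ↦ encard_le_of_isSeparated_of_subset_closedBall hε hC hsub

lemma exists_finset_isCover_closedBall (E : Type*) [NormedAddCommGroup E] [NormedSpace ℝ E]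
    [FiniteDimensional ℝ E] (hε : 0 < ε) :
    ∃ N : Finset E, N.card ≤ (1 + 2 / (ε : ℝ)) ^ finrank ℝ E ∧
      (N : Set E) ⊆ closedBall 0 1 ∧ IsCover ε (closedBall 0 1) (N : Set E) := by
  have hle := packingNumber_closedBall_le (E := E) hε
  have htop : packingNumber ε (closedBall (0 : E) 1) ≠ ⊤ := fun h ↦ by simp [h] at hle
  obtain ⟨N, hN⟩ :=
    (Set.encard_ne_top_iff.1 ((encard_maximalSeparatedSet htop).trans_ne htop)).exists_finset_coe
  refine ⟨N, ?_, hN ▸ maximalSeparatedSet_subset, hN ▸ isCover_maximalSeparatedSet htop⟩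
  rw [← encard_maximalSeparatedSet htop, ← hN, Set.encard_coe_eq_coe_finsetCard,
    ENat.toENNReal_coe] at hle
  simpa using ENNReal.toReal_le_of_le_ofReal (by positivity) hle

end Packing

variable {L : E →L[ℝ] F}

lemma opNorm_le_of_isCover_closedBall (hε : ε < 1) (hsub : N ⊆ closedBall 0 1)
    (hN : IsCover ε (closedBall 0 1) N) (hb : 0 ≤ b) (hL : ∀ y ∈ N, ‖L y‖ ≤ b * ‖y‖) :
    ‖L‖ ≤ b / (1 - ε) := by
  have : (ε : ℝ) < 1 := hε
  suffices ‖L‖ ≤ b + ‖L‖ * ε by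
    rw [le_div_iff₀ (by linarith)]
    linarith
  refine L.opNorm_le_of_unit_norm (by positivity) fun u hu ↦ ?_
  obtain ⟨y, hy, hyu⟩ := exists_norm_sub_le_of_isCover hN (show u ∈ closedBall 0 1 by simp [hu])
  calc ‖L u‖ = ‖L y + L (u - y)‖ := by rw [← map_add, add_sub_cancel]
    _ ≤ ‖L y‖ + ‖L (u - y)‖ := norm_add_le _ _
    _ ≤ b * ‖y‖ + ‖L‖ * ‖u - y‖ := add_le_add (hL y hy) (L.le_opNorm _)
    _ ≤ b + ‖L‖ * ε := by
      gcongr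
      exact mul_le_of_le_one_right hb (by simpa using hsub hy)

lemma le_norm_of_isCover_closedBall (hN : IsCover ε (closedBall 0 1) N) (ha : 0 ≤ a)
    (hL : ∀ y ∈ N, a * ‖y‖ ≤ ‖L y‖) (x : E) :
    (a * (1 - ε) - ‖L‖ * ε) * ‖x‖ ≤ ‖L x‖ := by
  suffices h : ∀ u, ‖u‖ = 1 → a * (1 - ε) - ‖L‖ * ε ≤ ‖L u‖ by
    rcases eq_or_ne x 0 with rfl | hx
    · simp
    have hx' : 0 < ‖x‖ := norm_pos_iff.2 hx
    have hu := h (‖x‖⁻¹ • x) (norm_smul_inv_norm hx)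
    rwa [map_smul, norm_smul, norm_inv, norm_norm, inv_mul_eq_div, le_div_iff₀ hx'] at hu
  intro u hu
  obtain ⟨y, hy, hyu⟩ := exists_norm_sub_le_of_isCover hN (show u ∈ closedBall 0 1 by simp [hu])
  calc a * (1 - ε) - ‖L‖ * ε ≤ a * ‖y‖ - ‖L‖ * ‖u - y‖ := by
        gcongr
        linarith [norm_sub_norm_le u y]
    _ ≤ ‖L y‖ - ‖L (u - y)‖ := sub_le_sub (hL y hy) (L.le_opNorm _)
    _ ≤ ‖L y + L (u - y)‖ := norm_sub_le_norm_add _ _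
    _ = ‖L u‖ := by rw [← map_add, add_sub_cancel]

lemma norm_mem_Icc_of_isCover_closedBall {c : ℝ} (hc : 0 ≤ c) (hsub : N ⊆ closedBall 0 1)
    (hN : IsCover (1 / 32) (closedBall 0 1) N)
    (hL : ∀ y ∈ N, ‖L y‖ ∈ Set.Icc (c / 5 * ‖y‖) (3 * c * ‖y‖)) (x : E) :
    ‖L x‖ ∈ Set.Icc (c / 20 * ‖x‖) (4 * c * ‖x‖) := by
  have hnorm : ‖L‖ ≤ 96 / 31 * c :=
    (opNorm_le_of_isCover_closedBall (by rw [div_lt_one₀] <;> norm_num) hsub hN (by positivity)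
      fun y hy ↦ (hL y hy).2).trans_eq (by push_cast; ring)
  have hlow := le_norm_of_isCover_closedBall hN (by positivity) (fun y hy ↦ (hL y hy).1) x
  push_cast at hlow
  constructor
  · refine le_trans ?_ hlow
    gcongr
    linarith
  · refine L.le_of_opNorm_le ?_ x
    linarith

end Net

section RestrictedIsometry

open Matrix Module Finset

/-- The two-sided restricted isometry property of compressed sensing: `T` distorts the Euclidean
norm of every `s`-sparse vector by a factor between `a` and `b`. -/
def RestrictedIsometry {ι F : Type*} [Fintype ι] [NormedAddCommGroup F] [Module ℝ F]
    (T : EuclideanSpace ℝ ι →ₗ[ℝ] F) (s : ℕ) (a b : ℝ) : Prop :=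
  ∀ x, #{j | x j ≠ 0} ≤ s → ‖T x‖ ∈ Set.Icc (a * ‖x‖) (b * ‖x‖)

variable {ι : Type*} [Fintype ι] {m n s : ℕ}

lemma measureReal_exists_mem_submodule_norm_notMem_Icc
    (V : Submodule ℝ (EuclideanSpace ℝ (Fin m))) :
    (gaussianMatrix n m).real {A | ∃ x ∈ V,
        ‖toEuclideanLin (of A) x‖ ∉ Set.Icc (√n / 20 * ‖x‖) (4 * √n * ‖x‖)} ≤
      65 ^ finrank ℝ V * (2 * Real.exp (-n)) := by
  obtain ⟨N, hcard, hsub, hN⟩ := exists_finset_isCover_closedBall V (ε := 1 / 32) (by simp)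
  have hnet : {A | ∃ x ∈ V,
      ‖toEuclideanLin (of A) x‖ ∉ Set.Icc (√n / 20 * ‖x‖) (4 * √n * ‖x‖)} ⊆
      ⋃ y ∈ N, {A : Fin n → Fin m → ℝ |
        ‖toEuclideanLin (of A) y‖ ∉ Set.Icc (√n / 5 * ‖y‖) (3 * √n * ‖y‖)} := by
    rintro A ⟨x, hx, hA⟩
    contrapose! hA
    simp only [Set.mem_iUnion, not_exists, Set.mem_ofPred_eq, not_not] at hA
    exact norm_mem_Icc_of_isCover_closedBall (Real.sqrt_nonneg n) hsub hN
      (L := (toEuclideanLin (of A)).toContinuousLinearMap ∘L V.subtypeL) hA ⟨x, hx⟩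
  calc _ ≤ _ := measureReal_mono hnet (measure_ne_top _ _)
    _ ≤ _ := measureReal_biUnion_finset_le _ _
    _ ≤ ∑ _y ∈ N, 2 * Real.exp (-n) :=
      sum_le_sum fun y _ ↦ measureReal_norm_toEuclideanLin_notMem_Icc (y : EuclideanSpace ℝ (Fin m))
    _ = #N * (2 * Real.exp (-n)) := by rw [sum_const, nsmul_eq_mul]
    _ ≤ 65 ^ finrank ℝ V * (2 * Real.exp (-n)) := by
      gcongr
      exact hcard.trans_eq (by norm_num)

lemma finrank_span_basisFun_le (S : Finset ι) :
    finrank ℝ (Submodule.span ℝ (EuclideanSpace.basisFun ι ℝ '' S)) ≤ #S := by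
  classical
  rw [← coe_image]
  exact (finrank_span_finset_le_card _).trans card_image_le

lemma mem_span_basisFun {S : Finset ι} {x : EuclideanSpace ℝ ι}
    (hx : ∀ j, x j ≠ 0 → j ∈ S) :
    x ∈ Submodule.span ℝ (EuclideanSpace.basisFun ι ℝ '' S) := by
  rw [← (EuclideanSpace.basisFun ι ℝ).sum_repr x]
  refine Submodule.sum_mem _ fun j _ ↦ ?_
  by_cases hj : x j = 0
  · simp [hj]
  · exact Submodule.smul_mem _ _ (Submodule.subset_span ⟨j, hx j hj, rfl⟩)

lemma measureReal_not_restrictedIsometry_le (hsm : s ≤ m) :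
    (gaussianMatrix n m).real
        {A | ¬ RestrictedIsometry (toEuclideanLin (of A)) s (√n / 20) (4 * √n)} ≤
      m.choose s * (65 ^ s * (2 * Real.exp (-n))) := by
  set V : Finset (Fin m) → Submodule ℝ (EuclideanSpace ℝ (Fin m)) := fun S ↦
    Submodule.span ℝ (EuclideanSpace.basisFun (Fin m) ℝ '' S)
  have hcover : {A | ¬ RestrictedIsometry (toEuclideanLin (of A)) s (√n / 20) (4 * √n)} ⊆
      ⋃ S ∈ powersetCard s univ, {A : Fin n → Fin m → ℝ | ∃ x ∈ V S,
        ‖toEuclideanLin (of A) x‖ ∉ Set.Icc (√n / 20 * ‖x‖) (4 * √n * ‖x‖)} := by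
    intro A hA
    simp only [RestrictedIsometry, Set.mem_ofPred_eq, not_forall] at hA
    obtain ⟨x, hcard, hx⟩ := hA
    obtain ⟨S, hsub, hS⟩ := exists_superset_card_eq hcard (by simpa using hsm)
    exact Set.mem_biUnion (mem_powersetCard.2 ⟨subset_univ S, hS⟩)
      ⟨x, mem_span_basisFun fun j hj ↦ hsub (by simpa using hj), hx⟩
  calc _ ≤ _ := measureReal_mono hcover (measure_ne_top _ _)
    _ ≤ _ := measureReal_biUnion_finset_le _ _
    _ ≤ ∑ _S ∈ powersetCard s (univ : Finset (Fin m)), 65 ^ s * (2 * Real.exp (-n)) := by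
      refine sum_le_sum fun S hS ↦ (measureReal_exists_mem_submodule_norm_notMem_Icc (V S)).trans ?_
      gcongr
      · norm_num
      · exact (finrank_span_basisFun_le S).trans_eq (mem_powersetCard.1 hS).2
    _ = _ := by rw [sum_const, nsmul_eq_mul, card_powersetCard, card_univ, Fintype.card_fin]

end RestrictedIsometry

section Counting

open Real

variable {m n s : ℕ} {L : ℝ}

lemma choose_le_exp_one_mul_div_pow (m s : ℕ) : (m.choose s : ℝ) ≤ (exp 1 * m / s) ^ s := by
  have hfac : (s : ℝ) ^ s ≤ exp 1 ^ s * s.factorial := by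
    rw [← div_le_iff₀ (by positivity), ← exp_nat_mul, mul_one]
    exact pow_div_factorial_le_exp _ (Nat.cast_nonneg s) s
  calc (m.choose s : ℝ) ≤ m ^ s / s.factorial := Nat.choose_le_pow_div s m
    _ ≤ (exp 1 * m / s) ^ s := by
      rw [div_pow, mul_pow, div_le_div_iff₀ (by positivity) (mod_cast Nat.pow_self_pos)]
      calc (m : ℝ) ^ s * s ^ s ≤ m ^ s * (exp 1 ^ s * s.factorial) := by gcongr
        _ = _ := by ring

lemma exists_nat_mul_le_le_two_mul {c r : ℝ} (hc : 0 < c) (hcr : c ≤ r) :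
    ∃ s : ℕ, 0 < s ∧ s * c ≤ r ∧ r ≤ 2 * s * c := by
  have hone : 1 ≤ r / c := (one_le_div hc).2 hcr
  have hpos : 1 ≤ ⌊r / c⌋₊ := Nat.one_le_floor_iff _ |>.2 hone
  have hpos' : (1 : ℝ) ≤ ⌊r / c⌋₊ := mod_cast hpos
  refine ⟨⌊r / c⌋₊, hpos, ?_, ?_⟩
  · exact (le_div_iff₀ hc).1 (Nat.floor_le (by positivity))
  · exact (div_le_iff₀ hc).1 ((Nat.lt_floor_add_one (r / c)).le.trans (by linarith))

lemma choose_mul_pow_le_exp_half (hn : 0 < n) (hL : exp 1 * m / n = exp L) (hL₁ : 1 ≤ L)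
    (hs : 0 < s) (hsn : s * (32 * L) ≤ n) (hns : n ≤ 2 * s * (32 * L)) :
    m.choose s * (65 : ℝ) ^ s ≤ exp (n / 2) := by
  have hm : exp 1 * m / s ≤ exp L * (64 * exp (L - 1)) := by
    calc exp 1 * m / s = exp 1 * m / n * (n / s) := by field_simp
      _ ≤ exp L * (64 * exp (L - 1)) := by
        rw [hL]
        gcongr
        rw [div_le_iff₀ (by positivity)]
        calc (n : ℝ) ≤ 64 * L * s := by linarith
          _ ≤ 64 * exp (L - 1) * s := by gcongr; linarith [add_one_le_exp (L - 1)]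
  have hexp : (64 * 65 : ℝ) ≤ exp 9 :=
    calc (64 * 65 : ℝ) ≤ 2.7 ^ 9 := by norm_num
      _ ≤ exp 1 ^ 9 := by gcongr; linarith [exp_one_gt_d9]
      _ = exp 9 := by rw [← exp_nat_mul]; norm_num
  calc m.choose s * (65 : ℝ) ^ s ≤ (exp 1 * m / s) ^ s * 65 ^ s := by
        gcongr
        exact choose_le_exp_one_mul_div_pow m s
    _ ≤ (exp L * (64 * exp (L - 1))) ^ s * 65 ^ s := by gcongr
    _ = (exp L * exp (L - 1) * (64 * 65)) ^ s := by rw [← mul_pow]; ring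
    _ ≤ (exp L * exp (L - 1) * exp 9) ^ s := by gcongr
    _ = exp (s * (2 * L + 8)) := by rw [← exp_add, ← exp_add, ← exp_nat_mul]; ring_nf
    _ ≤ exp (n / 2) := by
        gcongr
        nlinarith

lemma measureReal_not_restrictedIsometry_le_exp (hn : 0 < n) (hL : exp 1 * m / n = exp L)
    (hL₁ : 1 ≤ L) (hs : 0 < s) (hsm : s ≤ m) (hsn : s * (32 * L) ≤ n)
    (hns : n ≤ 2 * s * (32 * L)) :
    (gaussianMatrix n m).real {A | ¬ RestrictedIsometry (Matrix.toEuclideanLin (Matrix.of A)) s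
        (√n / 20) (4 * √n)} ≤ 2 * exp (-(1 / 2) * n) :=
  calc _ ≤ m.choose s * (65 ^ s * (2 * exp (-n))) := measureReal_not_restrictedIsometry_le hsm
    _ = m.choose s * 65 ^ s * (2 * exp (-n)) := by ring
    _ ≤ exp (n / 2) * (2 * exp (-n)) := by
      gcongr
      exact choose_mul_pow_le_exp_half hn hL hL₁ hs hsn hns
    _ = 2 * exp (-(1 / 2) * n) := by rw [mul_left_comm, ← exp_add]; ring_nf

end Counting

section SortedBlocks

open Finset WithLp

lemma norm_le_sqrt_mul_of_forall_abs_le {ι : Type*} [Fintype ι] {x : EuclideanSpace ℝ ι} {s : ℕ}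
    {t : ℝ} (ht : 0 ≤ t) (hs : #{j | x j ≠ 0} ≤ s) (hx : ∀ j, |x j| ≤ t) : ‖x‖ ≤ √s * t := by
  refine (pow_le_pow_iff_left₀ (norm_nonneg x) (by positivity) two_ne_zero).1 ?_
  calc ‖x‖ ^ 2 = ∑ j, x j ^ 2 := EuclideanSpace.real_norm_sq_eq x
    _ = ∑ j with x j ≠ 0, x j ^ 2 := (sum_filter_of_ne fun j _ h ↦ by simpa using h).symm
    _ ≤ ∑ j with x j ≠ 0, t ^ 2 := sum_le_sum fun j _ ↦ sq_le_sq.2 ((hx j).trans (le_abs_self t))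
    _ = #{j | x j ≠ 0} * t ^ 2 := by rw [sum_const, nsmul_eq_mul]
    _ ≤ s * t ^ 2 := by gcongr
    _ = (√s * t) ^ 2 := by rw [mul_pow, Real.sq_sqrt (Nat.cast_nonneg s)]

variable {m : ℕ}

/-- The permutation sending a coordinate to its position (starting from `0`) when the coordinates
of `x` are listed by decreasing absolute value. -/
noncomputable def absRank (x : EuclideanSpace ℝ (Fin m)) : Equiv.Perm (Fin m) :=
  (Tuple.sort fun j ↦ -|x j|).symm

/-- The `i`-th block of `s` consecutive coordinates of `x` in the order of decreasing absolute
value, extended by zero. -/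
noncomputable def sortedBlock (x : EuclideanSpace ℝ (Fin m)) (s i : ℕ) : EuclideanSpace ℝ (Fin m) :=
  toLp 2 fun j ↦ if (absRank x j : ℕ) / s = i then x j else 0

variable (x : EuclideanSpace ℝ (Fin m)) {s : ℕ} {c β : ℝ}

lemma abs_le_abs_of_absRank_le {j l : Fin m} (h : absRank x l ≤ absRank x j) : |x j| ≤ |x l| := by
  have hsort := Tuple.monotone_sort (fun j ↦ -|x j|) h
  simpa [absRank] using hsort

lemma card_filter_absRank_le (j : Fin m) : #{l | absRank x l ≤ absRank x j} = absRank x j + 1 := by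
  have hpre : ({l | absRank x l ≤ absRank x j} : Finset (Fin m)) =
      (Iic (absRank x j)).map (absRank x).symm.toEmbedding := by
    ext l
    simp
  rw [hpre, card_map, Fin.card_Iic]

lemma card_support_sortedBlock_le (hs : 0 < s) (i : ℕ) : #{j | sortedBlock x s i j ≠ 0} ≤ s := by
  calc #{j | sortedBlock x s i j ≠ 0} ≤ #(Ico (i * s) (i * s + s)) := by
        refine card_le_card_of_injOn (fun j ↦ (absRank x j : ℕ)) (fun j hj ↦ ?_)
          (Fin.val_injective.comp (absRank x).injective).injOn
        have hblock : (absRank x j : ℕ) / s = i := by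
          by_contra h
          simp [sortedBlock, h] at hj
        rw [Nat.div_eq_iff hs] at hblock
        simp only [coe_Ico, Set.mem_Ico]
        lia
    _ = s := by simp

lemma sortedBlock_zero_add_sum (s : ℕ) :
    sortedBlock x s 0 + ∑ i ∈ range m, sortedBlock x s (i + 1) = x := by
  rw [add_comm, ← sum_range_succ']
  ext j
  have hj : (absRank x j : ℕ) / s < m + 1 := by
    have hdiv := Nat.div_le_self (absRank x j) s
    lia
  simp [sortedBlock, hj]

variable {x}

lemma norm_sortedBlock_succ_le (hs : 0 < s) (hc : 0 ≤ c) (hβ : 0 ≤ β)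
    (hx : ∀ j, |x j| ≤ (c / (absRank x j + 1)) ^ β) (i : ℕ) :
    ‖sortedBlock x s (i + 1)‖ ≤ √s * (c / s) ^ β * (1 / ((i : ℝ) + 1) ^ β) := by
  have hentry (j : Fin m) : |sortedBlock x s (i + 1) j| ≤ (c / ((i + 1) * s)) ^ β := by
    by_cases hj : (absRank x j : ℕ) / s = i + 1
    · have hrank : ((i + 1 : ℝ) * s) ≤ absRank x j := by
        exact_mod_cast (Nat.le_div_iff_mul_le hs).1 hj.ge
      simp only [sortedBlock, hj, if_true]
      refine (hx j).trans ?_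
      gcongr
      linarith
    · simp only [sortedBlock, hj, if_false, abs_zero]
      positivity
  calc ‖sortedBlock x s (i + 1)‖ ≤ √s * (c / ((i + 1) * s)) ^ β :=
        norm_le_sqrt_mul_of_forall_abs_le (by positivity) (card_support_sortedBlock_le x hs _)
          hentry
    _ = √s * (c / s * (1 / (i + 1))) ^ β := by congr 2; field_simp
    _ = √s * (c / s) ^ β * (1 / ((i : ℝ) + 1) ^ β) := by
        rw [Real.mul_rpow (by positivity) (by positivity),
          Real.div_rpow zero_le_one (by positivity), Real.one_rpow, mul_assoc]

lemma norm_add_sum_le_of_map_eq_zero {E F κ : Type*} [SeminormedAddCommGroup E] [Module ℝ E]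
    [SeminormedAddCommGroup F] [Module ℝ F] {T : E →ₗ[ℝ] F} {a b : ℝ} (ha : 0 < a) {y₀ : E}
    {y : κ → E} {I : Finset κ} (hT : T (y₀ + ∑ i ∈ I, y i) = 0) (hy₀ : a * ‖y₀‖ ≤ ‖T y₀‖)
    (hy : ∀ i ∈ I, ‖T (y i)‖ ≤ b * ‖y i‖) :
    ‖y₀ + ∑ i ∈ I, y i‖ ≤ (1 + b / a) * ∑ i ∈ I, ‖y i‖ := by
  have hhead : ‖y₀‖ ≤ b / a * ∑ i ∈ I, ‖y i‖ := by
    rw [div_mul_eq_mul_div, le_div_iff₀' ha]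
    calc a * ‖y₀‖ ≤ ‖T y₀‖ := hy₀
      _ = ‖∑ i ∈ I, T (y i)‖ := by
        rw [← map_sum, eq_neg_of_add_eq_zero_left ((map_add T _ _).symm.trans hT), norm_neg]
      _ ≤ ∑ i ∈ I, b * ‖y i‖ := norm_sum_le_of_le I hy
      _ = b * ∑ i ∈ I, ‖y i‖ := by rw [mul_sum]
  calc ‖y₀ + ∑ i ∈ I, y i‖ ≤ ‖y₀‖ + ‖∑ i ∈ I, y i‖ := norm_add_le _ _
    _ ≤ b / a * ∑ i ∈ I, ‖y i‖ + ∑ i ∈ I, ‖y i‖ := add_le_add hhead (norm_sum_le _ _)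
    _ = (1 + b / a) * ∑ i ∈ I, ‖y i‖ := by ring

lemma summable_one_div_add_one_rpow (hβ : 1 < β) :
    Summable fun i : ℕ ↦ 1 / ((i : ℝ) + 1) ^ β := by
  simpa using (summable_nat_add_iff 1).2 (Real.summable_one_div_nat_rpow.2 hβ)

lemma RestrictedIsometry.norm_le_of_map_eq_zero {F : Type*} [NormedAddCommGroup F] [Module ℝ F]
    {T : EuclideanSpace ℝ (Fin m) →ₗ[ℝ] F} {a b : ℝ} (hT : RestrictedIsometry T s a b)
    (ha : 0 < a) (hb : 0 ≤ b) (hs : 0 < s) (hc : 0 ≤ c) (hβ : 1 < β) (hTx : T x = 0)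
    (hx : ∀ j, |x j| ≤ (c / (absRank x j + 1)) ^ β) :
    ‖x‖ ≤ (1 + b / a) * (√s * (c / s) ^ β * ∑' i : ℕ, 1 / ((i : ℝ) + 1) ^ β) := by
  have hblock (i : ℕ) := hT _ (card_support_sortedBlock_le x hs i)
  calc ‖x‖ = ‖sortedBlock x s 0 + ∑ i ∈ range m, sortedBlock x s (i + 1)‖ := by
        rw [sortedBlock_zero_add_sum]
    _ ≤ (1 + b / a) * ∑ i ∈ range m, ‖sortedBlock x s (i + 1)‖ :=
        norm_add_sum_le_of_map_eq_zero ha (by rw [sortedBlock_zero_add_sum, hTx]) (hblock 0).1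
          fun i _ ↦ (hblock (i + 1)).2
    _ ≤ (1 + b / a) * ∑ i ∈ range m, √s * (c / s) ^ β * (1 / ((i : ℝ) + 1) ^ β) := by
        gcongr with i
        exact norm_sortedBlock_succ_le hs hc (by linarith) hx i
    _ ≤ (1 + b / a) * (√s * (c / s) ^ β * ∑' i : ℕ, 1 / ((i : ℝ) + 1) ^ β) := by
        rw [← mul_sum]
        gcongr
        exact (summable_one_div_add_one_rpow hβ).sum_le_tsum _ fun i _ ↦ by positivity

end SortedBlocks

section Ellipsoid

open Finset WithLp

variable {m n s : ℕ} {p : ℝ≥0∞} {lam : ℝ}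

lemma lpnorm_two_eq_norm (x : Fin m → ℝ) : lpnorm 2 x = ‖toLp 2 x‖ := by
  simp [lpnorm, EuclideanSpace.norm_eq, Real.sqrt_eq_rpow]

lemma card_rpow_mul_le_lpnorm (hp : 0 < p) {y : Fin m → ℝ} {J : Finset (Fin m)}
    (hJ : J.Nonempty) {u : ℝ} (hu : 0 ≤ u) (huy : ∀ j ∈ J, u ≤ |y j|) :
    (#J : ℝ) ^ (1 / p.toReal) * u ≤ lpnorm p y := by
  unfold lpnorm
  split_ifs with hptop
  · obtain ⟨j, hj⟩ := hJ
    simpa [hptop] using (huy j hj).trans (le_ciSup (Set.finite_range fun j ↦ |y j|).bddAbove j)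
  · have hq : 0 < p.toReal := ENNReal.toReal_pos hp.ne' hptop
    calc (#J : ℝ) ^ (1 / p.toReal) * u = (#J * u ^ p.toReal) ^ (1 / p.toReal) := by
          rw [Real.mul_rpow (by positivity) (by positivity), ← Real.rpow_mul hu,
            mul_one_div_cancel hq.ne', Real.rpow_one]
      _ = (∑ _j ∈ J, u ^ p.toReal) ^ (1 / p.toReal) := by rw [sum_const, nsmul_eq_mul]
      _ ≤ (∑ j ∈ J, |y j| ^ p.toReal) ^ (1 / p.toReal) := by
          gcongr with j hj
          exact huy j hj
      _ ≤ (∑ j, |y j| ^ p.toReal) ^ (1 / p.toReal) := by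
          gcongr
          exact subset_univ J

lemma card_le_two_mul_card_filter_card_le (J : Finset (Fin m)) :
    #J ≤ 2 * #(J.filter fun j : Fin m ↦ #J ≤ 2 * ((j : ℕ) + 1)) := by
  have hsmall : #(J.filter fun j : Fin m ↦ ¬ #J ≤ 2 * ((j : ℕ) + 1)) ≤ #J / 2 := by
    rw [← card_range (#J / 2)]
    refine card_le_card_of_injOn (fun j ↦ (j : ℕ)) (fun j hj ↦ ?_) Fin.val_injective.injOn
    have hj' := (mem_filter.1 hj).2
    simp only [coe_range, Set.mem_Iio]
    lia
  have hsplit := card_filter_add_card_filter_not (s := J) fun j : Fin m ↦ #J ≤ 2 * ((j : ℕ) + 1)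
  lia

lemma le_two_div_card_rpow_of_mem_ellipsoid (hp : 0 < p) (hlam : 0 ≤ lam) {x : Fin m → ℝ}
    (hx : x ∈ ellipsoid p fun j : Fin m ↦ ((j : ℕ) + 1 : ℝ) ^ (-lam)) {J : Finset (Fin m)}
    (hJ : J.Nonempty) {t : ℝ} (ht : 0 ≤ t) (htx : ∀ j ∈ J, t ≤ |x j|) :
    t ≤ (2 / #J) ^ (lam + 1 / p.toReal) := by
  set J' : Finset (Fin m) := {j ∈ J | #J ≤ 2 * ((j : ℕ) + 1)}
  have hJpos : (0 : ℝ) < #J := mod_cast hJ.card_pos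
  have hcard : (#J : ℝ) / 2 ≤ #J' := by
    rw [div_le_iff₀' two_pos]
    exact_mod_cast card_le_two_mul_card_filter_card_le J
  have hJ' : J'.Nonempty := card_pos.1 (by exact_mod_cast (half_pos hJpos).trans_le hcard)
  have hentry : ∀ j ∈ J', t * (#J / 2 : ℝ) ^ lam ≤ |x j / ((j : ℕ) + 1 : ℝ) ^ (-lam)| := by
    intro j hj
    obtain ⟨hjJ, hjcard⟩ := mem_filter.1 hj
    have hj₀ : (0 : ℝ) < (j : ℕ) + 1 := by positivity
    have hj₁ : (#J : ℝ) / 2 ≤ (j : ℕ) + 1 := by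
      rw [div_le_iff₀' two_pos]
      exact_mod_cast hjcard
    rw [Real.rpow_neg hj₀.le, div_inv_eq_mul, abs_mul, abs_of_pos (Real.rpow_pos_of_pos hj₀ lam)]
    gcongr
    exact htx j hjJ
  have hnorm : t * (#J / 2 : ℝ) ^ (lam + 1 / p.toReal) ≤ 1 :=
    calc t * (#J / 2 : ℝ) ^ (lam + 1 / p.toReal)
        = (#J / 2 : ℝ) ^ (1 / p.toReal) * (t * (#J / 2 : ℝ) ^ lam) := by
          rw [Real.rpow_add (by positivity)]
          ring
      _ ≤ #J' ^ (1 / p.toReal) * (t * (#J / 2 : ℝ) ^ lam) := by gcongr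
      _ ≤ lpnorm p fun j ↦ x j / ((j : ℕ) + 1 : ℝ) ^ (-lam) :=
          card_rpow_mul_le_lpnorm hp hJ' (by positivity) hentry
      _ ≤ 1 := hx
  rwa [← inv_div, Real.inv_rpow (by positivity), ← one_div, le_div_iff₀ (by positivity)]

lemma abs_le_two_div_absRank_rpow_of_mem_ellipsoid (hp : 0 < p) (hlam : 0 ≤ lam) {x : Fin m → ℝ}
    (hx : x ∈ ellipsoid p fun j : Fin m ↦ ((j : ℕ) + 1 : ℝ) ^ (-lam)) (j : Fin m) :
    |x j| ≤ (2 / (absRank (toLp 2 x) j + 1)) ^ (lam + 1 / p.toReal) := by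
  have hcard := card_filter_absRank_le (toLp 2 x) j
  have hdecay := le_two_div_card_rpow_of_mem_ellipsoid hp hlam hx
    (J := {l | absRank (toLp 2 x) l ≤ absRank (toLp 2 x) j}) ⟨j, by simp⟩ (abs_nonneg (x j))
    fun l hl ↦ abs_le_abs_of_absRank_le (toLp 2 x) (mem_filter.1 hl).2
  rw [hcard] at hdecay
  exact_mod_cast hdecay

lemma radq_two_le {K E : Set (Fin m → ℝ)} {r : ℝ} (hr : 0 ≤ r)
    (h : ∀ x ∈ K, x ∈ E → ‖toLp 2 x‖ ≤ r) : radq 2 K E ≤ r := by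
  refine Real.sSup_le ?_ hr
  rintro _ ⟨x, ⟨hxK, hxE⟩, rfl⟩
  rw [lpnorm_two_eq_norm]
  exact h x hxK hxE

lemma toEuclideanLin_eq_zero_of_mem_kerSet {A : Fin n → Fin m → ℝ} {x : Fin m → ℝ}
    (hx : x ∈ kerSet A) : Matrix.toEuclideanLin (Matrix.of A) (toLp 2 x) = 0 := by
  ext i
  exact hx i

lemma RestrictedIsometry.radq_ellipsoid_kerSet_le {A : Fin n → Fin m → ℝ}
    (hA : RestrictedIsometry (Matrix.toEuclideanLin (Matrix.of A)) s (√n / 20) (4 * √n))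
    (hn : 0 < n) (hs : 0 < s) (hp : 0 < p) (hlam : 0 ≤ lam) (hβ : 1 < lam + 1 / p.toReal) :
    radq 2 (ellipsoid p fun j : Fin m ↦ ((j : ℕ) + 1 : ℝ) ^ (-lam)) (kerSet A) ≤
      81 * (√s * (2 / s) ^ (lam + 1 / p.toReal) *
        ∑' i : ℕ, 1 / ((i : ℝ) + 1) ^ (lam + 1 / p.toReal)) := by
  have hratio : 1 + 4 * √n / (√n / 20) = 81 := by field_simp; norm_num
  have : 0 ≤ ∑' i : ℕ, 1 / ((i : ℝ) + 1) ^ (lam + 1 / p.toReal) :=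
    tsum_nonneg fun i ↦ by positivity
  refine radq_two_le (by positivity) fun x hxE hxA ↦ ?_
  rw [← hratio]
  exact hA.norm_le_of_map_eq_zero (by positivity) (by positivity) hs zero_le_two hβ
    (toEuclideanLin_eq_zero_of_mem_kerSet hxA)
    (abs_le_two_div_absRank_rpow_of_mem_ellipsoid hp hlam hxE)

end Ellipsoid

lemma sqrt_mul_div_rpow_le {c r s β : ℝ} (hc : 0 ≤ c) (hs : 0 < s) (hr : 1 / s ≤ r)
    (hβ : 1 / 2 ≤ β) : √s * (c / s) ^ β ≤ c ^ β * r ^ (β - 1 / 2) :=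
  calc √s * (c / s) ^ β = c ^ β * (1 / s) ^ (β - 1 / 2) := by
        rw [Real.sqrt_eq_rpow, Real.div_rpow hc hs.le, one_div s, Real.inv_rpow hs.le,
          Real.rpow_sub hs]
        field_simp
    _ ≤ c ^ β * r ^ (β - 1 / 2) := by gcongr

lemma ofReal_one_sub_le_measure_of_measureReal_not_le {Ω : Type*} [MeasurableSpace Ω]
    {μ : Measure Ω} [IsProbabilityMeasure μ] {P : Ω → Prop} {δ : ℝ}
    (h : μ.real {ω | ¬ P ω} ≤ δ) : ENNReal.ofReal (1 - δ) ≤ μ {ω | P ω} := by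
  have hunion : 1 ≤ μ.real {ω | P ω} + μ.real {ω | ¬ P ω} := by
    have hone := measureReal_union_le (μ := μ) {ω | P ω} {ω | ¬ P ω}
    rwa [show {ω | P ω} ∪ {ω | ¬ P ω} = Set.univ from Set.union_compl_self _,
      probReal_univ] at hone
  exact ENNReal.ofReal_le_of_le_toReal (by rw [← measureReal_def]; linarith)

/-- At `p = ∞` the junk value `1 / (∞ : ℝ≥0∞).toReal = 1 / 0 = 0` is the intended `1 / p`. -/
theorem statement2_general (p : ℝ≥0∞) (hp : 0 < p) (lam : ℝ) (hlam : 0 ≤ lam)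
    (hβ : 1 < lam + 1 / p.toReal) :
    ∃ K : ℝ, 0 < K ∧ ∀ m n : ℕ, 1 ≤ n → n ≤ m →
      32 * Real.log (Real.exp 1 * m / n) ≤ n →
      ENNReal.ofReal (1 - 2 * Real.exp (-(1 / 2) * n)) ≤
        gaussianMatrix n m {A |
          radq 2 (ellipsoid p (fun j : Fin m => ((j : ℕ) + 1 : ℝ) ^ (-lam))) (kerSet A) ≤
            K * (Real.log (Real.exp 1 * m / n) / n) ^ (lam + 1 / p.toReal - 1 / 2)} := by
  set β := lam + 1 / p.toReal
  set Z := ∑' i : ℕ, 1 / ((i : ℝ) + 1) ^ β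
  have hZ : 0 < Z := (summable_one_div_add_one_rpow hβ).tsum_pos (fun i ↦ by positivity) 0
    (by positivity)
  refine ⟨81 * (2 ^ β * 64 ^ (β - 1 / 2) * Z), by positivity, fun m n hn hnm hlog ↦ ?_⟩
  set L := Real.log (Real.exp 1 * m / n)
  have hm : 0 < m := hn.trans hnm
  have hL : Real.exp 1 * m / n = Real.exp L := (Real.exp_log (by positivity)).symm
  have hL₁ : 1 ≤ L := by
    rw [← Real.exp_le_exp, ← hL, le_div_iff₀ (by positivity)]
    gcongr
  obtain ⟨s, hs, hsn, hns⟩ := exists_nat_mul_le_le_two_mul (by positivity) hlog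
  have hsm : s ≤ m := by
    refine le_trans ?_ hnm
    exact_mod_cast (by nlinarith : (s : ℝ) ≤ n)
  refine (ofReal_one_sub_le_measure_of_measureReal_not_le
    (measureReal_not_restrictedIsometry_le_exp hn hL hL₁ hs hsm hsn hns)).trans
    (measure_mono fun A hA ↦ (hA.radq_ellipsoid_kerSet_le hn hs hp hlam hβ).trans ?_)
  have hsL : 1 / (s : ℝ) ≤ 64 * (L / n) := by
    rw [← mul_div_assoc, div_le_div_iff₀ (by positivity) (by positivity)]
    linarith
  calc 81 * (√s * (2 / s) ^ β * Z) ≤ 81 * (2 ^ β * (64 * (L / n)) ^ (β - 1 / 2) * Z) := by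
        gcongr 81 * (?_ * Z)
        exact sqrt_mul_div_rpow_le zero_le_two (by positivity) hsL (by linarith)
    _ = 81 * (2 ^ β * 64 ^ (β - 1 / 2) * Z) * (L / n) ^ (β - 1 / 2) := by
        rw [Real.mul_rpow (by positivity) (by positivity)]
        ring

/-- For `0 < p ≤ 1` and polynomially decaying semiaxes `σ_j = j^{-λ}`
(0-indexed: `σ ⟨j-1⟩ = j^{-λ}`), with probability at least `1 - 2 exp(-C n)` one has
`rad(E^m_{p,σ}, ker G_{n,m}) ≤ K (log(e m/n)/n)^{λ + 1/p - 1/2}`,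
provided `n ≥ D log(e m/n)`. -/
theorem statement2 (p : ℝ≥0∞) (hp0 : 0 < p) (hp1 : p ≤ 1) (lam : ℝ) (hlam : 0 < lam) :
    ∃ C D K : ℝ, 0 < C ∧ 0 < D ∧ 0 < K ∧
      ∀ (m n : ℕ), 1 ≤ n → n < m →
        D * Real.log (Real.exp 1 * m / n) ≤ n →
        ENNReal.ofReal (1 - 2 * Real.exp (-C * n)) ≤
          gaussianMatrix n m {A |
            radq 2 (ellipsoid p (fun j : Fin m => ((j : ℕ) + 1 : ℝ) ^ (-lam))) (kerSet A) ≤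
              K * (Real.log (Real.exp 1 * m / n) / n) ^ (lam + 1 / p.toReal - 1 / 2)} := by
  have hp : 0 < p.toReal := ENNReal.toReal_pos hp0.ne' (hp1.trans_lt ENNReal.one_lt_top).ne
  have hinv : 1 ≤ 1 / p.toReal :=
    (one_le_div hp).2 (ENNReal.toReal_mono ENNReal.one_ne_top hp1)
  obtain ⟨K, hK, hrad⟩ := statement2_general p hp0 lam hlam.le (by linarith)
  exact ⟨1 / 2, 32, K, by norm_num, by norm_num, hK, fun m n hn hnm ↦ hrad m n hn hnm.le⟩
end
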